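/- There exist universal constants c₁, c₂ > 0 such that the following holds. Let X, A be finite sets, D a distribution on X, φ: X×A → ℝ^d with ‖φ(x,a)‖₂ ≤ 1, π₀ a full-support base policy, γ > 0, p ∈ [1,2], R > 0. Assume the Bradley–Terry model with target policy π* = π_{θ*}, ‖θ*‖_p ≤ R; assume V(π*) ⪰ λ·I_d with λ > 0; and assume the map r ↦ √(C_*^p(r)) is convex on [0, R]. Fix η, δ ∈ (0,1) and K ∈ ℕ, and suppose min(√(C_*^p(R)), R) ≥ c₁/γ. Define ξ_n = (52·e^{4γR}·d^{2/p} / (λ·η²·n)) · ln(9γRK·n/δ). Then with probability at least 1 − δ, for all batch sizes n satisfying ξ_n ≤ c₂ / C_*^p(R), the output θ̂_K of K iterations of on-policy DPO — starting from θ̂₀ = 0 and at each iteration k sampling n i.i.d. triples (x ∼ D, a¹, a² ∼ π_{θ̂_k}(·|x), preference labeled by σ(r*(x,a¹) − r*(x,a²))) and setting θ̂_{k+1} to a minimizer of the DPO loss over {‖θ‖_p ≤ R} — satisfies KL(π_{θ̂_K} ‖ π*) ≤ ‖θ̂_K − θ*‖_p² ≤ max((e²/γ²)·ξ_n, R²·η^{2K}).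 -/

import Mathlib

/-!
One DPO step is a logistic maximum-likelihood estimate over the ball `‖θ‖_p ≤ R`. The minimizer is
rounded to a coordinate grid fine enough to change the log-likelihood by at most `1`. On every grid
point the square-root likelihood ratio against `θ*`, tilted by a quarter of the mean squared gap of
the predicted preference probabilities (`sigGap`), has mean at most one (`hellinger_mean`), so Markov's
inequality and a union bound over the grid (`net_markov`) make the gap of the minimizer `O(Λ/n)`,
where `Λ` is the log of the grid size over the failure probability. Since margins stay in
`[-2γR, 2γR]`, the logistic slope is bounded below there, and the gap controls
`uᵀ V(π_θ) u` for `u = θ⁺ - θ*`, where `θ` is the sampling parameter and `θ⁺` the minimizer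
(`dpo_step`).

Writing `r` for `‖θ - θ*‖_p`, coverage gives `V(π*) ⪯ C_*^p(r) V(π_θ)` (`quad_le_CstarP`), and
`V(π*) ⪰ λ I` with the comparison of `ℓ^p` and `ℓ²` turns the bound into
`‖θ⁺ - θ*‖_p ≤ (7/4) η b √(C_*^p(r))` with `b = √ξ / γ`. As `C_*^p(0) ≤ 1`, convexity of the
square-root coverage yields `√(C_*^p(r)) ≤ 1 + √(C_*^p(R)) r / R`, and the assumptions on `ξ` and `γR`
give `b √(C_*^p(R)) ≤ 1/γ ≤ R/10`. The recursion is therefore affine with slope below `η`, and it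
contracts to `max (e b) (R η^K)` (`contraction`, `error_of_steps`). The steps hold simultaneously
with probability at least `(1 - δ/K)^K ≥ 1 - δ` under the adaptively generated product law
(`adaptive_mass`), and the KL divergence is at most `‖θ - θ*‖_p²` by Hoeffding's lemma
(`klPol_le`).

The constants are `c₁ = 10` and `c₂ = 1`. When `d = 0` the coverage is `0` and the lower bound on
its square root cannot hold.
-/

open Finset Matrix

/-- The sigmoid function σ(z) = 1/(1+e^{-z}). -/
noncomputable def sigmoid (z : ℝ) : ℝ := 1 / (1 + Real.exp (-z))

/-- Linear softmax policy: π_θ(a|x) ∝ π₀(a|x)·exp(θᵀφ(x,a)). -/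
noncomputable def pol {X A : Type*} [Fintype A] {d : ℕ}
    (π₀ : X → A → ℝ) (φ : X → A → Fin d → ℝ) (θ : Fin d → ℝ) (x : X) (a : A) : ℝ :=
  π₀ x a * Real.exp (∑ i, θ i * φ x a i) /
    ∑ b, π₀ x b * Real.exp (∑ i, θ i * φ x b i)

/-- Mean feature of policy π at prompt x. -/
noncomputable def featMean {X A : Type*} [Fintype A] {d : ℕ}
    (φ : X → A → Fin d → ℝ) (π : X → A → ℝ) (x : X) (i : Fin d) : ℝ :=
  ∑ a, π x a * φ x a i

/-- Feature covariance matrix V(π). -/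
noncomputable def covMat {X A : Type*} [Fintype X] [Fintype A] {d : ℕ}
    (D : X → ℝ) (φ : X → A → Fin d → ℝ) (π : X → A → ℝ) : Matrix (Fin d) (Fin d) ℝ :=
  Matrix.of fun i j => ∑ x, D x * ∑ a, π x a *
    ((φ x a i - featMean φ π x i) * (φ x a j - featMean φ π x j))

/-- Loewner order: M ⪯ N iff N − M is positive semidefinite. -/
def LoewnerLE {d : ℕ} (M N : Matrix (Fin d) (Fin d) ℝ) : Prop := (N - M).PosSemidef

/-- ℓ^p norm on ℝ^d. -/
noncomputable def lpN (p : ℝ) {d : ℕ} (θ : Fin d → ℝ) : ℝ := (∑ i, |θ i| ^ p) ^ (1/p)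

/-- Coverage C_{π→π'} = inf{C > 0 : V(π') ⪯ C·V(π)}. -/
noncomputable def coverageOf {X A : Type*} [Fintype X] [Fintype A] {d : ℕ}
    (D : X → ℝ) (φ : X → A → Fin d → ℝ) (π πt : X → A → ℝ) : ℝ :=
  sInf {C : ℝ | 0 < C ∧ LoewnerLE (covMat D φ πt) (C • covMat D φ π)}

/-- Local L^p-coverage C_*^p(r) = sup{C_{π_θ→π_{θ*}} : ‖θ − θ*‖_p ≤ r}. -/
noncomputable def CstarP {X A : Type*} [Fintype X] [Fintype A] {d : ℕ}
    (D : X → ℝ) (φ : X → A → Fin d → ℝ) (π₀ : X → A → ℝ)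
    (p : ℝ) (θstar : Fin d → ℝ) (r : ℝ) : ℝ :=
  sSup {c : ℝ | ∃ θ : Fin d → ℝ, lpN p (θ - θstar) ≤ r ∧
    c = coverageOf D φ (pol π₀ φ θ) (pol π₀ φ θstar)}

/-- Law of a labeled preference sample (x, a⁺, a⁻) under sampling policy π with
Bradley–Terry labeling by r*. -/
noncomputable def sampleLaw {X A : Type*} (D : X → ℝ) (π : X → A → ℝ)
    (rstar : X → A → ℝ) (t : X × A × A) : ℝ :=
  2 * D t.1 * π t.1 t.2.1 * π t.1 t.2.2 * sigmoid (rstar t.1 t.2.1 - rstar t.1 t.2.2)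

/-- DPO loss of parameter θ on dataset s. -/
noncomputable def dpoLoss {X A : Type*} [Fintype A] {d : ℕ}
    (π₀ : X → A → ℝ) (φ : X → A → Fin d → ℝ) (γ : ℝ) {n : ℕ}
    (θ : Fin d → ℝ) (s : Fin n → X × A × A) : ℝ :=
  ∑ i, - Real.log (sigmoid (γ * Real.log
      (pol π₀ φ θ (s i).1 (s i).2.1 / pol π₀ φ θ (s i).1 (s i).2.2)
    - γ * Real.log (π₀ (s i).1 (s i).2.1 / π₀ (s i).1 (s i).2.2)))

/-- KL divergence between policies, averaged over x ∼ D. -/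
noncomputable def klPol {X A : Type*} [Fintype X] [Fintype A]
    (D : X → ℝ) (π π' : X → A → ℝ) : ℝ :=
  ∑ x, D x * ∑ a, π x a * Real.log (π x a / π' x a)

/-- Parameter trajectory of on-policy DPO: θ̂₀ = 0 and θ̂_{k+1} = sel(D_k), where
sel selects a minimizer of the DPO loss on the k-th batch. -/
noncomputable def trajParam {X A : Type*} {d n K : ℕ}
    (sel : (Fin n → X × A × A) → (Fin d → ℝ))
    (s : Fin K → Fin n → X × A × A) : ℕ → Fin d → ℝ
  | 0 => fun _ => 0
  | (k+1) => if h : k < K then sel (s ⟨k, h⟩) else fun _ => 0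

/-! ### Norms on coordinate space -/

lemma lpN_nonneg (p : ℝ) {d : ℕ} (v : Fin d → ℝ) : 0 ≤ lpN p v :=
  Real.rpow_nonneg (sum_nonneg fun _ _ => Real.rpow_nonneg (abs_nonneg _) _) _

lemma lpN_rpow {p : ℝ} (hp : 1 ≤ p) {d : ℕ} (v : Fin d → ℝ) :
    lpN p v ^ p = ∑ i, |v i| ^ p := by
  unfold lpN
  rw [← Real.rpow_mul (sum_nonneg fun _ _ => Real.rpow_nonneg (abs_nonneg _) _),
    one_div_mul_cancel (by linarith), Real.rpow_one]

lemma abs_le_lpN {p : ℝ} (hp : 1 ≤ p) {d : ℕ} (v : Fin d → ℝ) (i : Fin d) :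
    |v i| ≤ lpN p v := by
  rw [← Real.rpow_le_rpow_iff (abs_nonneg _) (lpN_nonneg p v) (by linarith : 0 < p), lpN_rpow hp]
  exact single_le_sum (f := fun i => |v i| ^ p)
    (fun _ _ => Real.rpow_nonneg (abs_nonneg _) _) (mem_univ i)

/-- For `p ≤ 2` the `ℓ^p` norm dominates the Euclidean one. -/
lemma sum_sq_le_lpN_sq {p : ℝ} (hp : p ∈ Set.Icc (1:ℝ) 2) {d : ℕ} (v : Fin d → ℝ) :
    ∑ i, v i ^ 2 ≤ lpN p v ^ 2 := by
  have split : ∀ t : ℝ, 0 ≤ t → t ^ 2 = t ^ p * t ^ (2 - p) := by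
    intro t ht
    rcases ht.eq_or_lt with rfl | h
    · rw [Real.zero_rpow (by linarith [hp.1])]; simp
    · rw [← Real.rpow_add h]; norm_num
  calc ∑ i, v i ^ 2 = ∑ i, |v i| ^ p * |v i| ^ (2 - p) := by
        refine sum_congr rfl fun i _ => ?_
        rw [← split _ (abs_nonneg _), sq_abs]
    _ ≤ ∑ i, |v i| ^ p * lpN p v ^ (2 - p) := by
        refine sum_le_sum fun i _ => mul_le_mul_of_nonneg_left ?_ (Real.rpow_nonneg (abs_nonneg _) _)
        exact Real.rpow_le_rpow (abs_nonneg _) (abs_le_lpN hp.1 v i) (by linarith [hp.2])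
    _ = lpN p v ^ 2 := by
        rw [← sum_mul, ← lpN_rpow hp.1, ← split _ (lpN_nonneg p v)]

/-- Power-mean comparison of the `ℓ^p` and Euclidean norms in dimension `d`. -/
lemma lpN_sq_le {p : ℝ} (hp : p ∈ Set.Icc (1:ℝ) 2) {d : ℕ} (v : Fin d → ℝ) :
    lpN p v ^ 2 ≤ (d:ℝ) ^ (2 / p - 1) * ∑ i, v i ^ 2 := by
  have hp0 : 0 < p := by linarith [hp.1]
  have h := Real.rpow_sum_le_const_mul_sum_rpow_of_nonneg (s := (univ : Finset (Fin d)))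
    (f := fun i => |v i| ^ p) (p := 2 / p) (by rw [le_div_iff₀ hp0]; linarith [hp.2])
    (fun _ _ => Real.rpow_nonneg (abs_nonneg _) _)
  have e : ∀ i, (|v i| ^ p) ^ (2 / p) = v i ^ 2 := by
    intro i
    rw [← Real.rpow_mul (abs_nonneg _), mul_div_cancel₀ _ hp0.ne', Real.rpow_two, sq_abs]
  simp only [e, card_univ, Fintype.card_fin] at h
  refine le_trans (le_of_eq ?_) h
  unfold lpN
  rw [← Real.rpow_natCast, ← Real.rpow_mul (sum_nonneg fun _ _ => Real.rpow_nonneg (abs_nonneg _) _)]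
  congr 1
  push_cast; ring

/-- Cauchy–Schwarz against a feature vector of Euclidean norm at most one. -/
lemma abs_dot_le {p : ℝ} (hp : p ∈ Set.Icc (1:ℝ) 2) {d : ℕ} (v f : Fin d → ℝ)
    (hf : ∑ i, f i ^ 2 ≤ 1) : |∑ i, v i * f i| ≤ lpN p v := by
  refine abs_le_of_sq_le_sq ?_ (lpN_nonneg p v)
  calc (∑ i, v i * f i) ^ 2 ≤ (∑ i, v i ^ 2) * ∑ i, f i ^ 2 := sum_mul_sq_le_sq_mul_sq _ _ _
    _ ≤ (∑ i, v i ^ 2) * 1 :=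
        mul_le_mul_of_nonneg_left hf (sum_nonneg fun _ _ => sq_nonneg _)
    _ ≤ lpN p v ^ 2 := by rw [mul_one]; exact sum_sq_le_lpN_sq hp v

/-! ### Softmax policies -/

section Policies

variable {X A : Type} [Fintype A] {d : ℕ}
  {D : X → ℝ} {φ : X → A → Fin d → ℝ} {π₀ : X → A → ℝ}

lemma partition_pos [Nonempty A] (h0 : ∀ x a, 0 < π₀ x a) (w : A → ℝ) (x : X) :
    0 < ∑ b, π₀ x b * Real.exp (w b) :=
  sum_pos (fun b _ => mul_pos (h0 x b) (Real.exp_pos _)) univ_nonempty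

lemma pol_pos [Nonempty A] (h0 : ∀ x a, 0 < π₀ x a) (θ : Fin d → ℝ) (x : X) (a : A) :
    0 < pol π₀ φ θ x a :=
  div_pos (mul_pos (h0 x a) (Real.exp_pos _)) (partition_pos h0 _ x)

lemma sum_pol [Nonempty A] (h0 : ∀ x a, 0 < π₀ x a) (θ : Fin d → ℝ) (x : X) :
    ∑ a, pol π₀ φ θ x a = 1 := by
  unfold pol
  rw [← sum_div]
  exact div_self (partition_pos h0 _ x).ne'

lemma log_pol_div [Nonempty A] (h0 : ∀ x a, 0 < π₀ x a) (θ : Fin d → ℝ) (x : X) (a b : A) :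
    Real.log (pol π₀ φ θ x a / pol π₀ φ θ x b) - Real.log (π₀ x a / π₀ x b)
      = ∑ i, θ i * φ x a i - ∑ i, θ i * φ x b i := by
  have hZ := partition_pos h0 (fun b => ∑ i, θ i * φ x b i) x
  have ha := h0 x a
  have hb := h0 x b
  unfold pol
  rw [div_div_div_cancel_right₀ hZ.ne', Real.log_div (by positivity) (by positivity),
    Real.log_mul (by positivity) (by positivity), Real.log_mul (by positivity) (by positivity),
    Real.log_exp, Real.log_exp, Real.log_div (by positivity) (by positivity)]
  ring

/-- Realizability identifies reward differences with `γ` times feature-linear differences. -/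
lemma reward_diff [Nonempty A] (h0 : ∀ x a, 0 < π₀ x a) {γ : ℝ} (hγ : 0 < γ)
    {rstar : X → A → ℝ} {θs : Fin d → ℝ}
    (hr : ∀ x a, pol π₀ φ θs x a
      = π₀ x a * Real.exp (γ⁻¹ * rstar x a) / ∑ b, π₀ x b * Real.exp (γ⁻¹ * rstar x b))
    (x : X) (a b : A) :
    rstar x a - rstar x b = γ * (∑ i, θs i * φ x a i - ∑ i, θs i * φ x b i) := by
  have hZ := partition_pos h0 (fun b => γ⁻¹ * rstar x b) x
  have ha := h0 x a
  have hb := h0 x b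
  rw [← log_pol_div h0 θs x a b, hr, hr, div_div_div_cancel_right₀ hZ.ne',
    Real.log_div (by positivity) (by positivity),
    Real.log_mul (by positivity) (by positivity), Real.log_mul (by positivity) (by positivity),
    Real.log_exp, Real.log_exp, Real.log_div (by positivity) (by positivity)]
  field_simp
  ring

/-- Hoeffding's lemma for a finite distribution. -/
lemma hoeffding_fin (P w : A → ℝ) (hP : ∀ a, 0 ≤ P a) (hs : ∑ a, P a = 1) (s : ℝ)
    (hw : ∀ a, |w a| ≤ s) :
    ∑ a, P a * Real.exp ((∑ b, P b * w b) - w a) ≤ Real.exp (s ^ 2 / 2) := by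
  let _ : MeasurableSpace A := ⊤
  have hsum : ∑ a, ENNReal.ofReal (P a) = 1 := by
    rw [← ENNReal.ofReal_sum_of_nonneg (fun a _ => hP a), hs, ENNReal.ofReal_one]
  let μ := PMF.ofFintype (fun a => ENNReal.ofReal (P a)) hsum
  have hint : ∀ f : A → ℝ, ∫ a, f a ∂μ.toMeasure = ∑ a, P a * f a := by
    intro f
    rw [PMF.integral_eq_sum]
    refine sum_congr rfl fun a _ => ?_
    simp [μ, ENNReal.toReal_ofReal (hP a)]
  have hm := (ProbabilityTheory.hasSubgaussianMGF_of_mem_Icc (X := fun a => - w a)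
    (μ := μ.toMeasure) (a := -s) (b := s) (measurable_from_top.aemeasurable)
    (Filter.Eventually.of_forall fun a => by
      have := abs_le.1 (hw a); constructor <;> linarith)).mgf_le 1
  rw [ProbabilityTheory.mgf, hint, hint] at hm
  refine le_trans (le_of_eq ?_) (hm.trans (le_of_eq ?_))
  · refine sum_congr rfl fun a _ => ?_
    simp only [mul_neg, sum_neg_distrib]
    congr 2; ring
  · congr 1
    simp only [NNReal.coe_pow, NNReal.coe_div, coe_nnnorm, Real.norm_eq_abs, NNReal.coe_ofNat,
      sub_neg_eq_add, div_pow, sq_abs]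
    ring

/-- A pointwise density bound `π* ≤ e^{2r}·π_θ`, valid when `‖θ − θ*‖_p ≤ r`. -/
lemma pol_le_exp_mul [Nonempty A] (hφ : ∀ x a, ∑ i, (φ x a i) ^ 2 ≤ 1) (h0 : ∀ x a, 0 < π₀ x a)
    {p : ℝ} (hp : p ∈ Set.Icc (1:ℝ) 2) {θ θs : Fin d → ℝ} {r : ℝ} (hr : lpN p (θ - θs) ≤ r)
    (x : X) (a : A) : pol π₀ φ θs x a ≤ Real.exp (2 * r) * pol π₀ φ θ x a := by
  have hdiff : ∀ b, |∑ i, θ i * φ x b i - ∑ i, θs i * φ x b i| ≤ r := by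
    intro b
    have := (abs_dot_le hp (θ - θs) (φ x b) (hφ x b)).trans hr
    simpa only [Pi.sub_apply, sub_mul, sum_sub_distrib] using this
  have hZ := partition_pos h0 (fun b => ∑ i, θ i * φ x b i) x
  have hZs := partition_pos h0 (fun b => ∑ i, θs i * φ x b i) x
  have h1 : π₀ x a * Real.exp (∑ i, θs i * φ x a i)
      ≤ Real.exp r * (π₀ x a * Real.exp (∑ i, θ i * φ x a i)) := by
    rw [mul_left_comm, ← Real.exp_add]
    refine mul_le_mul_of_nonneg_left (Real.exp_le_exp.2 ?_) (h0 x a).le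
    linarith [(abs_le.1 (hdiff a)).1]
  have h2 : ∑ b, π₀ x b * Real.exp (∑ i, θ i * φ x b i)
      ≤ Real.exp r * ∑ b, π₀ x b * Real.exp (∑ i, θs i * φ x b i) := by
    rw [mul_sum]
    refine sum_le_sum fun b _ => ?_
    rw [mul_left_comm, ← Real.exp_add]
    refine mul_le_mul_of_nonneg_left (Real.exp_le_exp.2 ?_) (h0 x b).le
    linarith [(abs_le.1 (hdiff b)).2]
  unfold pol
  rw [mul_div_assoc', div_le_div_iff₀ hZs hZ, two_mul, Real.exp_add]
  have hn : 0 ≤ π₀ x a * Real.exp (∑ i, θ i * φ x a i) := (mul_pos (h0 x a) (Real.exp_pos _)).le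
  calc _ ≤ (Real.exp r * (π₀ x a * Real.exp (∑ i, θ i * φ x a i)))
        * (Real.exp r * ∑ b, π₀ x b * Real.exp (∑ i, θs i * φ x b i)) :=
        mul_le_mul h1 h2 hZ.le (mul_nonneg (Real.exp_pos _).le hn)
    _ = _ := by ring

variable [Fintype X]

lemma klPol_le [Nonempty A] (hD : ∀ x, 0 ≤ D x) (hD1 : ∑ x, D x = 1)
    (hφ : ∀ x a, ∑ i, (φ x a i) ^ 2 ≤ 1) (h0 : ∀ x a, 0 < π₀ x a)
    {p : ℝ} (hp : p ∈ Set.Icc (1:ℝ) 2) (θ θs : Fin d → ℝ) :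
    klPol D (pol π₀ φ θ) (pol π₀ φ θs) ≤ lpN p (θ - θs) ^ 2 := by
  have key : ∀ x, ∑ a, pol π₀ φ θ x a * Real.log (pol π₀ φ θ x a / pol π₀ φ θs x a)
      ≤ lpN p (θ - θs) ^ 2 := by
    intro x
    set w : A → ℝ := fun a => ∑ i, (θ - θs) i * φ x a i with hw
    set P := pol π₀ φ θ x with hP
    set m := ∑ b, P b * w b with hm
    set S := ∑ b, P b * Real.exp (m - w b) with hS
    have hPp : ∀ a, 0 < P a := pol_pos h0 θ x
    have hP1 : ∑ a, P a = 1 := sum_pol h0 θ x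
    have hSpos : 0 < S :=
      sum_pos (fun b _ => mul_pos (hPp b) (Real.exp_pos _)) univ_nonempty
    have hZ := partition_pos h0 (fun b => ∑ i, θ i * φ x b i) x
    have hZs := partition_pos h0 (fun b => ∑ i, θs i * φ x b i) x
    have hwe : ∀ a, Real.exp (∑ i, θs i * φ x a i)
        = Real.exp (∑ i, θ i * φ x a i) * Real.exp (- w a) := by
      intro a
      rw [← Real.exp_add]
      congr 1
      simp only [hw, Pi.sub_apply, sub_mul, sum_sub_distrib]; ring
    have hSS : S * ∑ b, π₀ x b * Real.exp (∑ i, θ i * φ x b i)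
        = Real.exp m * ∑ b, π₀ x b * Real.exp (∑ i, θs i * φ x b i) := by
      rw [hS, sum_mul, mul_sum]
      refine sum_congr rfl fun b _ => ?_
      have : P b * ∑ b, π₀ x b * Real.exp (∑ i, θ i * φ x b i)
          = π₀ x b * Real.exp (∑ i, θ i * φ x b i) := by
        rw [hP]; unfold pol; exact div_mul_cancel₀ _ hZ.ne'
      rw [mul_right_comm, this, hwe, sub_eq_add_neg, Real.exp_add]; ring
    have hratio : ∀ a, P a / pol π₀ φ θs x a = Real.exp (w a - m) * S := by
      intro a
      have ha := h0 x a
      rw [div_eq_iff (pol_pos h0 θs x a).ne', hP]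
      unfold pol
      rw [mul_div_assoc', div_eq_div_iff hZ.ne' hZs.ne', hwe a, Real.exp_sub]
      have e1 : Real.exp (w a) * Real.exp (- w a) = 1 := by rw [← Real.exp_add]; simp
      have e2 := Real.exp_pos m
      field_simp
      calc _ = Real.exp m * ∑ b, π₀ x b * Real.exp (∑ i, θs i * φ x b i) := by ring
        _ = S * (∑ b, π₀ x b * Real.exp (∑ i, θ i * φ x b i))
            * (Real.exp (w a) * Real.exp (- w a)) := by rw [e1, hSS, mul_one]
        _ = _ := by ring
    have hlog : Real.log S ≤ lpN p (θ - θs) ^ 2 / 2 := by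
      rw [Real.log_le_iff_le_exp hSpos]
      exact hoeffding_fin P w (fun a => (hPp a).le) hP1 _ fun a => abs_dot_le hp _ _ (hφ x a)
    calc ∑ a, P a * Real.log (P a / pol π₀ φ θs x a)
        = ∑ a, (P a * w a + P a * (Real.log S - m)) := by
          refine sum_congr rfl fun a _ => ?_
          rw [hratio, Real.log_mul (Real.exp_pos _).ne' hSpos.ne', Real.log_exp]; ring
      _ = Real.log S := by rw [sum_add_distrib, ← sum_mul, hP1, ← hm]; ring
      _ ≤ lpN p (θ - θs) ^ 2 := by nlinarith [sq_nonneg (lpN p (θ - θs))]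
  calc klPol D (pol π₀ φ θ) (pol π₀ φ θs) ≤ ∑ x, D x * lpN p (θ - θs) ^ 2 :=
        sum_le_sum fun x _ => mul_le_mul_of_nonneg_left (key x) (hD x)
    _ = _ := by rw [← sum_mul, hD1, one_mul]

/-! ### Covariance and coverage -/

/-- Twice the variance of the scalar feature `vᵀφ`, written as the mean squared difference of two
independent responses. -/
noncomputable def pairForm (D : X → ℝ) (φ : X → A → Fin d → ℝ) (π : X → A → ℝ)
    (v : Fin d → ℝ) : ℝ :=
  ∑ x, D x * ∑ a, ∑ b, π x a * π x b * (∑ i, v i * φ x a i - ∑ i, v i * φ x b i) ^ 2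

lemma pairForm_eq (π : X → A → ℝ) (hπ : ∀ x, ∑ a, π x a = 1) (v : Fin d → ℝ) :
    pairForm D φ π v = 2 * (v ⬝ᵥ (covMat D φ π *ᵥ v)) := by
  have hq : v ⬝ᵥ (covMat D φ π *ᵥ v)
      = ∑ x, D x * ∑ a, π x a * (∑ i, v i * φ x a i - ∑ i, v i * featMean φ π x i) ^ 2 := by
    simp only [dotProduct, mulVec, covMat, of_apply, mul_sum, sum_mul]
    rw [sum_congr rfl fun i _ => sum_comm, sum_comm]
    refine sum_congr rfl fun x _ => ?_
    rw [sum_congr rfl fun i _ => sum_comm, sum_comm]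
    refine sum_congr rfl fun a _ => ?_
    rw [← sum_sub_distrib, sq, sum_mul_sum, mul_sum, mul_sum]
    refine sum_congr rfl fun i _ => ?_
    rw [mul_sum, mul_sum]
    refine sum_congr rfl fun j _ => ?_
    ring
  have hmean : ∀ x, ∑ i, v i * featMean φ π x i = ∑ a, π x a * ∑ i, v i * φ x a i := by
    intro x
    simp only [featMean, mul_sum]
    rw [sum_comm]
    exact sum_congr rfl fun a _ => sum_congr rfl fun i _ => by ring
  rw [hq, pairForm, mul_sum]
  refine sum_congr rfl fun x _ => ?_
  rw [hmean]
  set f : A → ℝ := fun a => ∑ i, v i * φ x a i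
  set m := ∑ a, π x a * f a with hm
  have e1 : ∑ a, ∑ b, π x a * π x b * (f a - f b) ^ 2
      = 2 * ∑ a, π x a * (f a) ^ 2 - 2 * m ^ 2 := by
    have : ∀ a b, π x a * π x b * (f a - f b) ^ 2
        = π x a * f a ^ 2 * π x b + π x a * (π x b * f b ^ 2)
          - 2 * ((π x a * f a) * (π x b * f b)) := by intros; ring
    simp only [this, sum_sub_distrib, sum_add_distrib, ← mul_sum, ← sum_mul, hπ x]
    rw [← hm]; ring
  have e2 : ∑ a, π x a * (f a - m) ^ 2 = ∑ a, π x a * (f a) ^ 2 - m ^ 2 := by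
    have : ∀ a, π x a * (f a - m) ^ 2
        = π x a * f a ^ 2 - 2 * m * (π x a * f a) + m ^ 2 * π x a := by intros; ring
    simp only [this, sum_sub_distrib, sum_add_distrib, ← mul_sum, hπ x]
    rw [← hm]; ring
  rw [e1, e2]; ring

lemma covMat_isHermitian (π : X → A → ℝ) : (covMat D φ π).IsHermitian := by
  ext i j
  simp [covMat, conjTranspose_apply, mul_comm]

lemma loewner_quad {M N : Matrix (Fin d) (Fin d) ℝ} (h : LoewnerLE M N) (v : Fin d → ℝ) :
    v ⬝ᵥ (M *ᵥ v) ≤ v ⬝ᵥ (N *ᵥ v) := by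
  have := h.dotProduct_mulVec_nonneg v
  simp only [star_trivial, sub_mulVec, dotProduct_sub] at this
  linarith

lemma loewner_of_quad {M N : Matrix (Fin d) (Fin d) ℝ} (hM : M.IsHermitian) (hN : N.IsHermitian)
    (h : ∀ v : Fin d → ℝ, v ⬝ᵥ (M *ᵥ v) ≤ v ⬝ᵥ (N *ᵥ v)) : LoewnerLE M N := by
  refine PosSemidef.of_dotProduct_mulVec_nonneg (hN.sub hM) fun v => ?_
  simp only [star_trivial, sub_mulVec, dotProduct_sub]
  linarith [h v]

lemma pairForm_nonneg (hD : ∀ x, 0 ≤ D x) {π : X → A → ℝ} (hπ : ∀ x a, 0 ≤ π x a)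
    (v : Fin d → ℝ) : 0 ≤ pairForm D φ π v :=
  sum_nonneg fun x _ => mul_nonneg (hD x) <| sum_nonneg fun a _ => sum_nonneg fun b _ =>
    mul_nonneg (mul_nonneg (hπ x a) (hπ x b)) (sq_nonneg _)

/-- The set defining the coverage coefficient contains `e^{4r}` on the `ℓ^p` ball of radius `r`. -/
lemma exp_mem_coverage [Nonempty A] (hD : ∀ x, 0 ≤ D x) (hφ : ∀ x a, ∑ i, (φ x a i) ^ 2 ≤ 1)
    (h0 : ∀ x a, 0 < π₀ x a) {p : ℝ} (hp : p ∈ Set.Icc (1:ℝ) 2) {θ θs : Fin d → ℝ} {r : ℝ}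
    (hr : lpN p (θ - θs) ≤ r) :
    Real.exp (4 * r) ∈ {C : ℝ | 0 < C ∧
      LoewnerLE (covMat D φ (pol π₀ φ θs)) (C • covMat D φ (pol π₀ φ θ))} := by
  refine ⟨Real.exp_pos _, loewner_of_quad (covMat_isHermitian _) ?_ fun v => ?_⟩
  · exact IsSelfAdjoint.smul (IsSelfAdjoint.all _) (covMat_isHermitian _)
  · have h1 := pairForm_eq (D := D) (φ := φ) (pol π₀ φ θs) (sum_pol h0 θs) v
    have h2 := pairForm_eq (D := D) (φ := φ) (pol π₀ φ θ) (sum_pol h0 θ) v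
    have h3 : pairForm D φ (pol π₀ φ θs) v ≤ Real.exp (4 * r) * pairForm D φ (pol π₀ φ θ) v := by
      unfold pairForm
      rw [mul_sum]
      refine sum_le_sum fun x _ => ?_
      rw [mul_left_comm]
      refine mul_le_mul_of_nonneg_left ?_ (hD x)
      rw [mul_sum]
      refine sum_le_sum fun a _ => ?_
      rw [mul_sum]
      refine sum_le_sum fun b _ => ?_
      rw [← mul_assoc]
      refine mul_le_mul_of_nonneg_right ?_ (sq_nonneg _)
      have e : Real.exp (4 * r) = Real.exp (2 * r) * Real.exp (2 * r) := by
        rw [← Real.exp_add]; ring_nf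
      calc pol π₀ φ θs x a * pol π₀ φ θs x b
          ≤ (Real.exp (2 * r) * pol π₀ φ θ x a) * (Real.exp (2 * r) * pol π₀ φ θ x b) :=
            mul_le_mul (pol_le_exp_mul hφ h0 hp hr x a) (pol_le_exp_mul hφ h0 hp hr x b)
              (pol_pos h0 θs x b).le (mul_pos (Real.exp_pos _) (pol_pos h0 θ x a)).le
        _ = _ := by rw [e]; ring
    simp only [smul_mulVec, dotProduct_smul, smul_eq_mul]
    rw [h1, h2] at h3
    linarith

lemma coverage_bddBelow (π πt : X → A → ℝ) :
    BddBelow {C : ℝ | 0 < C ∧ LoewnerLE (covMat D φ πt) (C • covMat D φ π)} :=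
  ⟨0, fun _ h => h.1.le⟩

lemma CstarP_bddAbove [Nonempty A] (hD : ∀ x, 0 ≤ D x) (hφ : ∀ x a, ∑ i, (φ x a i) ^ 2 ≤ 1)
    (h0 : ∀ x a, 0 < π₀ x a) {p : ℝ} (hp : p ∈ Set.Icc (1:ℝ) 2) (θs : Fin d → ℝ) (r : ℝ) :
    BddAbove {c : ℝ | ∃ θ : Fin d → ℝ, lpN p (θ - θs) ≤ r ∧
      c = coverageOf D φ (pol π₀ φ θ) (pol π₀ φ θs)} := by
  refine ⟨Real.exp (4 * r), ?_⟩
  rintro c ⟨θ, hθ, rfl⟩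
  exact csInf_le (coverage_bddBelow _ _) (exp_mem_coverage hD hφ h0 hp hθ)

lemma coverageOf_nonneg (π πt : X → A → ℝ) : 0 ≤ coverageOf D φ π πt :=
  Real.sInf_nonneg fun _ h => h.1.le

lemma CstarP_nonneg (p : ℝ) (θs : Fin d → ℝ) (r : ℝ) : 0 ≤ CstarP D φ π₀ p θs r :=
  Real.sSup_nonneg fun _ ⟨_, _, h⟩ => h ▸ coverageOf_nonneg _ _

/-- The covariance comparison at the level of quadratic forms, with the local coverage at any
radius containing `θ`. -/
lemma quad_le_CstarP [Nonempty A] (hD : ∀ x, 0 ≤ D x) (hφ : ∀ x a, ∑ i, (φ x a i) ^ 2 ≤ 1)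
    (h0 : ∀ x a, 0 < π₀ x a) {p : ℝ} (hp : p ∈ Set.Icc (1:ℝ) 2) {θ θs : Fin d → ℝ} {r : ℝ}
    (hr : lpN p (θ - θs) ≤ r) (v : Fin d → ℝ) :
    v ⬝ᵥ (covMat D φ (pol π₀ φ θs) *ᵥ v)
      ≤ CstarP D φ π₀ p θs r * (v ⬝ᵥ (covMat D φ (pol π₀ φ θ) *ᵥ v)) := by
  have hq : 0 ≤ v ⬝ᵥ (covMat D φ (pol π₀ φ θ) *ᵥ v) := by
    have h1 := pairForm_eq (D := D) (φ := φ) (pol π₀ φ θ) (sum_pol h0 θ) v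
    have h2 := pairForm_nonneg (φ := φ) hD (fun x a => (pol_pos (φ := φ) h0 θ x a).le) v
    linarith
  have hne := exp_mem_coverage hD hφ h0 hp hr
  have hle : coverageOf D φ (pol π₀ φ θ) (pol π₀ φ θs) ≤ CstarP D φ π₀ p θs r :=
    le_csSup (CstarP_bddAbove hD hφ h0 hp θs r) ⟨θ, hr, rfl⟩
  refine le_trans ?_ (mul_le_mul_of_nonneg_right hle hq)
  have hall : ∀ C ∈ {C : ℝ | 0 < C ∧ LoewnerLE (covMat D φ (pol π₀ φ θs))
      (C • covMat D φ (pol π₀ φ θ))}, v ⬝ᵥ (covMat D φ (pol π₀ φ θs) *ᵥ v)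
      ≤ C * (v ⬝ᵥ (covMat D φ (pol π₀ φ θ) *ᵥ v)) := by
    intro C hC
    have := loewner_quad hC.2 v
    simpa only [smul_mulVec, dotProduct_smul, smul_eq_mul] using this
  rcases hq.eq_or_lt with h | h
  · have := hall _ hne
    rw [← h, mul_zero] at this ⊢
    exact this
  · rw [← div_le_iff₀ h]
    exact le_csInf ⟨_, hne⟩ fun C hC => (div_le_iff₀ h).2 (hall C hC)

end Policies

/-! ### The logistic function -/

lemma sigmoid_eq (z : ℝ) : sigmoid z = Real.sigmoid z := by
  rw [sigmoid, Real.sigmoid_def, one_div]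

lemma sig_pos (z : ℝ) : 0 < sigmoid z := sigmoid_eq z ▸ Real.sigmoid_pos z

lemma sig_le_one (z : ℝ) : sigmoid z ≤ 1 := sigmoid_eq z ▸ Real.sigmoid_le_one z

lemma sig_add_neg (z : ℝ) : sigmoid z + sigmoid (-z) = 1 := by
  rw [sigmoid_eq, sigmoid_eq, Real.sigmoid_neg]; ring

lemma log_sig_sub_le (a b : ℝ) : Real.log (sigmoid b) - Real.log (sigmoid a) ≤ |b - a| := by
  have h : sigmoid b ≤ Real.exp |b - a| * sigmoid a := by
    have e1 : Real.exp (-a) ≤ Real.exp |b - a| * Real.exp (-b) := by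
      rw [← Real.exp_add]; exact Real.exp_le_exp.2 (by linarith [le_abs_self (b - a)])
    have e2 : 1 ≤ Real.exp |b - a| := Real.one_le_exp (abs_nonneg _)
    have pa := Real.exp_pos (-a)
    have pb := Real.exp_pos (-b)
    unfold sigmoid
    rw [mul_one_div, div_le_div_iff₀ (by positivity) (by positivity)]
    linarith
  have := Real.log_le_log (sig_pos b) h
  rw [Real.log_mul (Real.exp_pos _).ne' (sig_pos a).ne', Real.log_exp] at this
  linarith

/-- On `[-B, B]` the logistic function has slope at least `e^{-B}/4`. -/
lemma sig_lower {B a b : ℝ} (ha : |a| ≤ B) (hb : |b| ≤ B) :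
    Real.exp (-(2 * B)) / 16 * (a - b) ^ 2 ≤ (sigmoid a - sigmoid b) ^ 2 := by
  wlog h : a ≤ b generalizing a b
  · have := this hb ha (le_of_not_ge h)
    nlinarith
  have key : Real.exp (-B) / 4 * (b - a) ≤ sigmoid b - sigmoid a := by
    have h1 := (convex_Icc (-B) B).mul_sub_le_image_sub_of_le_deriv (f := Real.sigmoid)
      (C := Real.exp (-B) / 4) continuous_sigmoid.continuousOn
      differentiable_sigmoid.differentiableOn ?_ a (abs_le.1 ha) b (abs_le.1 hb) h
    · rwa [sigmoid_eq, sigmoid_eq]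
    · intro z hz
      rw [interior_Icc] at hz
      rw [Real.deriv_sigmoid]
      simp only
      rw [← Real.sigmoid_neg, ← Real.sigmoid_mul_rexp_neg, Real.sigmoid_def]
      have p1 := Real.exp_pos (-z)
      have p2 := Real.exp_pos B
      have h1 : 1 ≤ Real.exp B * Real.exp (-z) := by
        rw [← Real.exp_add]; exact Real.one_le_exp (by linarith [hz.2])
      have h2 : Real.exp (-z) ≤ Real.exp B := Real.exp_le_exp.2 (by linarith [hz.1])
      have h3 : 1 ≤ Real.exp B := Real.one_le_exp (by linarith [hz.1, hz.2])
      rw [Real.exp_neg B]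
      field_simp
      nlinarith
  have h2 : 0 ≤ Real.exp (-B) / 4 * (b - a) :=
    mul_nonneg (by positivity) (by linarith)
  have h3 : Real.exp (-(2 * B)) = Real.exp (-B) ^ 2 := by
    rw [← Real.exp_nat_mul]; congr 1; push_cast; ring
  calc _ = (Real.exp (-B) / 4 * (b - a)) ^ 2 := by rw [h3]; ring
    _ ≤ (sigmoid b - sigmoid a) ^ 2 := pow_le_pow_left₀ h2 key 2
    _ = _ := by ring

lemma sig_lipschitz (a b : ℝ) : (sigmoid a - sigmoid b) ^ 2 ≤ (a - b) ^ 2 := by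
  wlog h : a ≤ b generalizing a b
  · have := this b a (le_of_not_ge h)
    nlinarith
  have mono : sigmoid a ≤ sigmoid b := by
    rw [sigmoid_eq, sigmoid_eq]; exact Real.sigmoid_le h
  have key : sigmoid b - sigmoid a ≤ b - a := by
    have h1 := log_sig_sub_le a b
    rw [abs_of_nonneg (by linarith), ← Real.log_div (sig_pos b).ne' (sig_pos a).ne'] at h1
    have h2 := Real.one_sub_inv_le_log_of_pos (div_pos (sig_pos b) (sig_pos a))
    rw [inv_div] at h2
    have h3 : sigmoid b * (sigmoid a / sigmoid b) = sigmoid a :=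
      mul_div_cancel₀ _ (sig_pos b).ne'
    have h4 : sigmoid b * (1 - sigmoid a / sigmoid b) ≤ 1 * (b - a) :=
      mul_le_mul (sig_le_one b) (by linarith)
        (by rw [sub_nonneg, div_le_one (sig_pos b)]; exact mono) zero_le_one
    linarith
  nlinarith

/-- The pointwise Hellinger-type inequality `√(pq) ≤ (p+q)/2 − (p−q)²/8` on `[0,1]`, with
`√(pq)` written as `p·√(q/p)`. -/
lemma hellinger_point (a b : ℝ) :
    sigmoid a * Real.exp ((Real.log (sigmoid b) - Real.log (sigmoid a)) / 2)
      ≤ (sigmoid a + sigmoid b) / 2 - (sigmoid b - sigmoid a) ^ 2 / 8 := by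
  have sq : ∀ z, Real.exp (Real.log (sigmoid z) / 2) ^ 2 = sigmoid z := by
    intro z
    rw [← Real.exp_nat_mul]
    push_cast
    rw [mul_div_cancel₀ _ (two_ne_zero), Real.exp_log (sig_pos z)]
  have le1 : ∀ z, Real.exp (Real.log (sigmoid z) / 2) ≤ 1 := by
    intro z
    rw [Real.exp_le_one_iff]
    linarith [Real.log_nonpos (sig_pos z).le (sig_le_one z)]
  have e : Real.exp ((Real.log (sigmoid b) - Real.log (sigmoid a)) / 2)
      = Real.exp (Real.log (sigmoid b) / 2) / Real.exp (Real.log (sigmoid a) / 2) := by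
    rw [← Real.exp_sub]; ring_nf
  rw [e, ← sq a, ← sq b, Real.log_pow, Real.log_pow, Real.log_exp, Real.log_exp]
  push_cast
  have ea : (2 * (Real.log (sigmoid a) / 2)) / 2 = Real.log (sigmoid a) / 2 := by ring
  have eb : (2 * (Real.log (sigmoid b) / 2)) / 2 = Real.log (sigmoid b) / 2 := by ring
  rw [ea, eb]
  have ua := le1 a
  have ub := le1 b
  have pa := Real.exp_pos (Real.log (sigmoid a) / 2)
  have pb := Real.exp_pos (Real.log (sigmoid b) / 2)
  set u := Real.exp (Real.log (sigmoid a) / 2)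
  set v := Real.exp (Real.log (sigmoid b) / 2)
  have h1 : u ^ 2 * (v / u) = u * v := by field_simp
  have h2 : (v + u) ^ 2 ≤ 4 := by nlinarith
  have h3 : (v ^ 2 - u ^ 2) ^ 2 ≤ (v - u) ^ 2 * 4 := by
    calc (v ^ 2 - u ^ 2) ^ 2 = (v - u) ^ 2 * (v + u) ^ 2 := by ring
      _ ≤ _ := mul_le_mul_of_nonneg_left h2 (sq_nonneg _)
  rw [h1]
  nlinarith

/-! ### Finite probability -/

/-- A union bound over a finite family of nonnegative functions of mean at most one: on i.i.d. draws,
with probability at least `1 − ε` every product `∏ᵢ E g (sᵢ)` stays below `|ι| / ε`. -/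
lemma net_markov {Ω ι : Type} [Fintype Ω] [Fintype ι] [Nonempty ι] (q : Ω → ℝ)
    (hq : ∀ t, 0 ≤ q t) (hq1 : ∑ t, q t = 1) (E : ι → Ω → ℝ) (hE : ∀ g t, 0 ≤ E g t)
    (hE1 : ∀ g, ∑ t, q t * E g t ≤ 1) (n : ℕ) {ε : ℝ} (hε : 0 < ε) (good : (Fin n → Ω) → Prop)
    (hgood : ∀ s, (∀ g, ∏ i, E g (s i) ≤ Fintype.card ι / ε) → good s) :
    1 - ε ≤ ∑ s : Fin n → Ω, Set.indicator {s | good s} (fun s => ∏ i, q (s i)) s := by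
  classical
  have hN : (0:ℝ) < Fintype.card ι := by exact_mod_cast Fintype.card_pos
  have htot : ∑ s : Fin n → Ω, ∏ i, q (s i) = 1 := by
    rw [← Fintype.sum_pow, hq1, one_pow]
  have hexp : ∑ s : Fin n → Ω, (∏ i, q (s i)) * ∑ g, ∏ i, E g (s i) ≤ Fintype.card ι := by
    simp only [mul_sum, ← prod_mul_distrib]
    rw [sum_comm]
    calc _ ≤ ∑ _g : ι, (1:ℝ) := by
          refine sum_le_sum fun g _ => ?_
          rw [← Fintype.sum_pow (fun t => q t * E g t) n]
          exact pow_le_one₀ (sum_nonneg fun t _ => mul_nonneg (hq t) (hE g t)) (hE1 g)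
      _ = _ := by simp
  have hpt : ∀ s : Fin n → Ω, (∏ i, q (s i)) - ε / Fintype.card ι *
      ((∏ i, q (s i)) * ∑ g, ∏ i, E g (s i))
      ≤ Set.indicator {s | good s} (fun s => ∏ i, q (s i)) s := by
    intro s
    have hQ : 0 ≤ ∏ i, q (s i) := prod_nonneg fun i _ => hq _
    have hEs : ∀ g, 0 ≤ ∏ i, E g (s i) := fun g => prod_nonneg fun i _ => hE _ _
    have hS : 0 ≤ ∑ g, ∏ i, E g (s i) := sum_nonneg fun g _ => hEs g
    by_cases h : good s
    · rw [Set.indicator_of_mem (by exact h)]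
      have : 0 ≤ ε / Fintype.card ι * ((∏ i, q (s i)) * ∑ g, ∏ i, E g (s i)) := by positivity
      linarith
    · rw [Set.indicator_of_notMem (by exact h)]
      have h' := mt (hgood s) h
      push Not at h'
      obtain ⟨g, hg⟩ := h'
      have h1 : (Fintype.card ι : ℝ) / ε ≤ ∑ g, ∏ i, E g (s i) :=
        hg.le.trans (single_le_sum (f := fun g => ∏ i, E g (s i)) (fun g _ => hEs g) (mem_univ g))
      have h2 : 1 ≤ ε / Fintype.card ι * ∑ g, ∏ i, E g (s i) := by
        calc (1:ℝ) = ε / Fintype.card ι * (Fintype.card ι / ε) := by field_simp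
          _ ≤ _ := mul_le_mul_of_nonneg_left h1 (by positivity)
      nlinarith
  calc 1 - ε = 1 - ε / Fintype.card ι * Fintype.card ι := by field_simp
    _ ≤ 1 - ε / Fintype.card ι * ∑ s : Fin n → Ω, (∏ i, q (s i)) * ∑ g, ∏ i, E g (s i) := by
        have := mul_le_mul_of_nonneg_left hexp (by positivity : 0 ≤ ε / (Fintype.card ι : ℝ))
        linarith
    _ = ∑ s : Fin n → Ω, ((∏ i, q (s i)) - ε / Fintype.card ι *
          ((∏ i, q (s i)) * ∑ g, ∏ i, E g (s i))) := by
        rw [sum_sub_distrib, htot, ← mul_sum]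
    _ ≤ _ := sum_le_sum fun s _ => hpt s

/-- States visited by the recursion `state (k+1) = sel (observation k)` from an arbitrary initial
state `θ₀`, with a default value past the horizon. -/
def trajFrom {T Θ : Type*} (sel : T → Θ) (dflt θ₀ : Θ) {K : ℕ} (s : Fin K → T) : ℕ → Θ
  | 0 => θ₀
  | (k+1) => if h : k < K then sel (s ⟨k, h⟩) else dflt

/-- If every one-step (sub-probability) kernel has mass at least `c`, then the law of `K`
adaptively generated observations has mass at least `c ^ K`. -/
lemma adaptive_mass {T Θ : Type*} [Fintype T] (sel : T → Θ) (dflt : Θ) (W : Θ → T → ℝ)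
    (hW : ∀ θ t, 0 ≤ W θ t) {c : ℝ} (hc : 0 ≤ c) (hWc : ∀ θ, c ≤ ∑ t, W θ t) :
    ∀ (K : ℕ) (θ₀ : Θ), c ^ K ≤ ∑ s : Fin K → T, ∏ k : Fin K, W (trajFrom sel dflt θ₀ s k) (s k)
  | 0, θ₀ => by simp
  | (K+1), θ₀ => by
    rw [← (Fin.consEquiv (fun _ : Fin (K+1) => T)).sum_comp, Fintype.sum_prod_type]
    have hstep : ∀ (t : T) (s : Fin K → T),
        ∏ k : Fin (K+1), W (trajFrom sel dflt θ₀ (Fin.consEquiv (fun _ : Fin (K+1) => T) (t, s)) k)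
          (Fin.consEquiv (fun _ : Fin (K+1) => T) (t, s) k)
        = W θ₀ t * ∏ k : Fin K, W (trajFrom sel dflt (sel t) s k) (s k) := by
      intro t s
      rw [Fin.prod_univ_succ]
      congr 1
      refine prod_congr rfl fun k _ => ?_
      congr 1
      rcases k with ⟨k, hk⟩
      cases k with
      | zero => simp [trajFrom, Fin.consEquiv]
      | succ k =>
        have hk' : k < K := by omega
        have h1 : trajFrom sel dflt θ₀ (Fin.consEquiv (fun _ : Fin (K+1) => T) (t, s)) (k + 1 + 1)
            = sel (s ⟨k, hk'⟩) := dif_pos (Nat.lt_succ_of_lt hk)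
        have h2 : trajFrom sel dflt (sel t) s (k + 1) = sel (s ⟨k, hk'⟩) := dif_pos hk'
        exact h1.trans h2.symm
    simp only [hstep, ← mul_sum]
    calc c ^ (K+1) = c * c ^ K := pow_succ' c K
      _ ≤ (∑ t, W θ₀ t) * c ^ K := mul_le_mul_of_nonneg_right (hWc θ₀) (pow_nonneg hc K)
      _ = ∑ t, W θ₀ t * c ^ K := sum_mul _ _ _
      _ ≤ _ := sum_le_sum fun t _ =>
          mul_le_mul_of_nonneg_left (adaptive_mass sel dflt W hW hc hWc K (sel t)) (hW θ₀ t)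

/-! ### One on-policy DPO step -/

section Step

variable {X A : Type} {d : ℕ}
  {D : X → ℝ} {φ : X → A → Fin d → ℝ} {π₀ : X → A → ℝ}

/-- The implicit-reward margin `γ·θᵀ(φ(x,a) − φ(x,b))` of a triple `(x, a, b)`. -/
noncomputable def margin (φ : X → A → Fin d → ℝ) (γ : ℝ) (θ : Fin d → ℝ) (t : X × A × A) : ℝ :=
  γ * (∑ i, θ i * φ t.1 t.2.1 i - ∑ i, θ i * φ t.1 t.2.2 i)

/-- The law of an unlabeled comparison `(x, a, b)` with `a, b` independent from `π`. -/
noncomputable def pairLaw (D : X → ℝ) (π : X → A → ℝ) (t : X × A × A) : ℝ :=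
  D t.1 * π t.1 t.2.1 * π t.1 t.2.2

lemma dpoLoss_eq [Fintype A] [Nonempty A] (h0 : ∀ x a, 0 < π₀ x a) (γ : ℝ) {n : ℕ} (θ : Fin d → ℝ)
    (s : Fin n → X × A × A) :
    dpoLoss π₀ φ γ θ s = ∑ i, - Real.log (sigmoid (margin φ γ θ (s i))) := by
  unfold dpoLoss margin
  refine sum_congr rfl fun i _ => ?_
  rw [← mul_sub, log_pol_div h0]

lemma abs_margin_le (hφ : ∀ x a, ∑ i, (φ x a i) ^ 2 ≤ 1) {p : ℝ} (hp : p ∈ Set.Icc (1:ℝ) 2)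
    {γ R : ℝ} (hγ : 0 < γ) {θ : Fin d → ℝ} (hθ : lpN p θ ≤ R) (t : X × A × A) :
    |margin φ γ θ t| ≤ 2 * (γ * R) := by
  unfold margin
  rw [abs_mul, abs_of_pos hγ, mul_left_comm]
  refine mul_le_mul_of_nonneg_left ?_ hγ.le
  have h1 := abs_le.1 ((abs_dot_le hp θ _ (hφ t.1 t.2.1)).trans hθ)
  have h2 := abs_le.1 ((abs_dot_le hp θ _ (hφ t.1 t.2.2)).trans hθ)
  rw [abs_le]
  constructor <;> linarith [h1.1, h1.2, h2.1, h2.2]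

/-- Coordinatewise rounding to accuracy `h` moves every margin by at most `2γhd`. -/
lemma abs_margin_sub_le (hφ : ∀ x a, ∑ i, (φ x a i) ^ 2 ≤ 1) {γ h : ℝ} (hγ : 0 < γ)
    {θ θ' : Fin d → ℝ} (hθ : ∀ i, |θ i - θ' i| ≤ h) (t : X × A × A) :
    |margin φ γ θ t - margin φ γ θ' t| ≤ 2 * γ * h * d := by
  have hc : ∀ x a i, |φ x a i| ≤ 1 := by
    intro x a i
    rw [← sq_le_one_iff_abs_le_one]
    exact (single_le_sum (f := fun i => φ x a i ^ 2) (fun _ _ => sq_nonneg _) (mem_univ i)).trans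
      (hφ x a)
  have e : margin φ γ θ t - margin φ γ θ' t
      = γ * ∑ i, (θ i - θ' i) * (φ t.1 t.2.1 i - φ t.1 t.2.2 i) := by
    unfold margin
    rw [← mul_sub]
    congr 1
    simp only [mul_sub, sub_mul, sum_sub_distrib]
    ring
  rw [e, abs_mul, abs_of_pos hγ]
  calc γ * |∑ i, (θ i - θ' i) * (φ t.1 t.2.1 i - φ t.1 t.2.2 i)|
      ≤ γ * ∑ _i : Fin d, h * 2 := by
        refine mul_le_mul_of_nonneg_left ((abs_sum_le_sum_abs _ _).trans ?_) hγ.le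
        refine sum_le_sum fun i _ => ?_
        rw [abs_mul]
        refine mul_le_mul (hθ i) ?_ (abs_nonneg _) ((abs_nonneg _).trans (hθ i))
        have h1 := abs_le.1 (hc t.1 t.2.1 i)
        have h2 := abs_le.1 (hc t.1 t.2.2 i)
        rw [abs_le]
        constructor <;> linarith [h1.1, h1.2, h2.1, h2.2]
    _ = _ := by rw [sum_const, card_univ, Fintype.card_fin, nsmul_eq_mul]; ring

lemma pairLaw_nonneg (hD : ∀ x, 0 ≤ D x) {π : X → A → ℝ} (hπ : ∀ x a, 0 ≤ π x a)
    (t : X × A × A) : 0 ≤ pairLaw D π t :=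
  mul_nonneg (mul_nonneg (hD _) (hπ _ _)) (hπ _ _)

variable [Fintype X] [Fintype A]

lemma sum_pairLaw (hD1 : ∑ x, D x = 1) {π : X → A → ℝ} (hπ : ∀ x, ∑ a, π x a = 1) :
    ∑ t, pairLaw D π t = 1 := by
  simp only [Fintype.sum_prod_type, pairLaw, ← mul_sum, hπ, mul_one, hD1]

/-- Swapping the two responses flips the margin, so the labeled law, which is twice the summand,
has total mass one. -/
lemma sum_pairLaw_sig (hD1 : ∑ x, D x = 1) {π : X → A → ℝ} (hπ : ∀ x, ∑ a, π x a = 1)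
    (γ : ℝ) (θ : Fin d → ℝ) :
    ∑ t, pairLaw D π t * sigmoid (margin φ γ θ t) = 1 / 2 := by
  have hswap : ∑ t, pairLaw D π t * sigmoid (margin φ γ θ t)
      = ∑ t, pairLaw D π t * sigmoid (- margin φ γ θ t) := by
    simp only [Fintype.sum_prod_type]
    refine sum_congr rfl fun x _ => ?_
    rw [sum_comm]
    refine sum_congr rfl fun a _ => sum_congr rfl fun b _ => ?_
    simp only [pairLaw, margin]
    rw [← mul_neg, neg_sub]
    ring
  have hadd : ∑ t, pairLaw D π t * sigmoid (margin φ γ θ t)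
      + ∑ t, pairLaw D π t * sigmoid (- margin φ γ θ t) = 1 := by
    rw [← sum_add_distrib]
    simp only [← mul_add, sig_add_neg, mul_one]
    exact sum_pairLaw hD1 hπ
  linarith

/-- The mean squared gap between the predicted and the true preference probabilities. -/
noncomputable def sigGap (D : X → ℝ) (φ : X → A → Fin d → ℝ) (π : X → A → ℝ) (γ : ℝ)
    (θs θ : Fin d → ℝ) : ℝ :=
  ∑ t, pairLaw D π t * (sigmoid (margin φ γ θ t) - sigmoid (margin φ γ θs t)) ^ 2

/-- The exponentially tilted square-root likelihood ratio has mean at most one under the true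
preference law. -/
lemma hellinger_mean (hD : ∀ x, 0 ≤ D x) (hD1 : ∑ x, D x = 1) {π : X → A → ℝ}
    (hπ0 : ∀ x a, 0 ≤ π x a) (hπ : ∀ x, ∑ a, π x a = 1) (γ : ℝ) (θs θ : Fin d → ℝ) :
    ∑ t, (2 * pairLaw D π t * sigmoid (margin φ γ θs t)) *
      Real.exp ((Real.log (sigmoid (margin φ γ θ t)) - Real.log (sigmoid (margin φ γ θs t))) / 2
        + sigGap D φ π γ θs θ / 4) ≤ 1 := by
  have h1 : ∑ t, (2 * pairLaw D π t * sigmoid (margin φ γ θs t)) *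
      Real.exp ((Real.log (sigmoid (margin φ γ θ t)) - Real.log (sigmoid (margin φ γ θs t))) / 2)
      ≤ 1 - sigGap D φ π γ θs θ / 4 := by
    calc _ ≤ ∑ t, (pairLaw D π t * sigmoid (margin φ γ θs t)
          + pairLaw D π t * sigmoid (margin φ γ θ t)
          - pairLaw D π t * (sigmoid (margin φ γ θ t) - sigmoid (margin φ γ θs t)) ^ 2 / 4) := by
          refine sum_le_sum fun t _ => ?_
          have := mul_le_mul_of_nonneg_left (hellinger_point (margin φ γ θs t) (margin φ γ θ t))
            (pairLaw_nonneg hD hπ0 t)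
          nlinarith
      _ = _ := by
          rw [sum_sub_distrib, sum_add_distrib, sum_pairLaw_sig hD1 hπ, sum_pairLaw_sig hD1 hπ,
            ← sum_div, ← sigGap]
          norm_num
  simp only [Real.exp_add, ← mul_assoc]
  rw [← sum_mul]
  calc _ ≤ (1 - sigGap D φ π γ θs θ / 4) * Real.exp (sigGap D φ π γ θs θ / 4) :=
        mul_le_mul_of_nonneg_right h1 (Real.exp_pos _).le
    _ ≤ Real.exp (-(sigGap D φ π γ θs θ / 4)) * Real.exp (sigGap D φ π γ θs θ / 4) := by
        refine mul_le_mul_of_nonneg_right ?_ (Real.exp_pos _).le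
        have := Real.add_one_le_exp (-(sigGap D φ π γ θs θ / 4))
        linarith
    _ = 1 := by rw [← Real.exp_add]; simp

/-- The gap controls the on-policy covariance form of the parameter error. -/
lemma quad_le_sigGap (hD : ∀ x, 0 ≤ D x) (hφ : ∀ x a, ∑ i, (φ x a i) ^ 2 ≤ 1)
    {p : ℝ} (hp : p ∈ Set.Icc (1:ℝ) 2) {π : X → A → ℝ}
    (hπ0 : ∀ x a, 0 ≤ π x a) (hπ : ∀ x, ∑ a, π x a = 1) {γ R : ℝ} (hγ : 0 < γ)
    {θs θ : Fin d → ℝ} (hθs : lpN p θs ≤ R) (hθ : lpN p θ ≤ R) :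
    (θ - θs) ⬝ᵥ (covMat D φ π *ᵥ (θ - θs))
      ≤ 8 * Real.exp (4 * γ * R) / γ ^ 2 * sigGap D φ π γ θs θ := by
  have h1 : Real.exp (-(4 * γ * R)) / 16 * γ ^ 2 * pairForm D φ π (θ - θs)
      ≤ sigGap D φ π γ θs θ := by
    have e : pairForm D φ π (θ - θs) * γ ^ 2
        = ∑ t, pairLaw D π t * (margin φ γ θ t - margin φ γ θs t) ^ 2 := by
      simp only [Fintype.sum_prod_type, pairForm, sum_mul, mul_sum]
      refine sum_congr rfl fun x _ => sum_congr rfl fun a _ => sum_congr rfl fun b _ => ?_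
      simp only [pairLaw, margin, Pi.sub_apply, sub_mul, sum_sub_distrib]
      ring
    rw [mul_assoc, mul_comm (γ ^ 2), e, mul_sum, sigGap]
    refine sum_le_sum fun t _ => ?_
    rw [mul_left_comm]
    refine mul_le_mul_of_nonneg_left ?_ (pairLaw_nonneg hD hπ0 t)
    have := sig_lower (abs_margin_le hφ hp hγ hθ t) (abs_margin_le hφ hp hγ hθs t)
    refine le_trans (le_of_eq ?_) this
    congr 3; ring
  rw [pairForm_eq _ hπ, Real.exp_neg] at h1
  have he := Real.exp_pos (4 * γ * R)
  set Q := (θ - θs) ⬝ᵥ (covMat D φ π *ᵥ (θ - θs))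
  calc Q = 8 * Real.exp (4 * γ * R) / γ ^ 2
        * ((Real.exp (4 * γ * R))⁻¹ / 16 * γ ^ 2 * (2 * Q)) := by field_simp; ring
    _ ≤ _ := mul_le_mul_of_nonneg_left h1 (by positivity)

/-- High-probability bound for one DPO step. The empirical minimizer is rounded to a grid of mesh
`h` and side `2M+1`; `Λ` bounds the logarithm of the grid size divided by the failure
probability. -/
lemma dpo_step [Nonempty A] (hD : ∀ x, 0 ≤ D x) (hD1 : ∑ x, D x = 1)
    (hφ : ∀ x a, ∑ i, (φ x a i) ^ 2 ≤ 1) (h0 : ∀ x a, 0 < π₀ x a)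
    {p : ℝ} (hp : p ∈ Set.Icc (1:ℝ) 2) {γ R : ℝ} (hγ : 0 < γ)
    {rstar : X → A → ℝ} {θs : Fin d → ℝ} (hθs : lpN p θs ≤ R)
    (hr : ∀ x a, pol π₀ φ θs x a
      = π₀ x a * Real.exp (γ⁻¹ * rstar x a) / ∑ b, π₀ x b * Real.exp (γ⁻¹ * rstar x b))
    {n : ℕ} (hn : 0 < n) {sel : (Fin n → X × A × A) → (Fin d → ℝ)}
    (hsel : ∀ s, lpN p (sel s) ≤ R ∧
      ∀ θ : Fin d → ℝ, lpN p θ ≤ R → dpoLoss π₀ φ γ (sel s) s ≤ dpoLoss π₀ φ γ θ s)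
    {h : ℝ} (hh : 0 < h) {M : ℕ} (hM : R ≤ M * h) (hhn : 2 * γ * h * d * n ≤ 1)
    {ε Λ : ℝ} (hε : 0 < ε) (hΛ : Real.log ((2 * M + 1 : ℝ) ^ d / ε) ≤ Λ) (hΛ4 : 4 ≤ Λ)
    (θ : Fin d → ℝ) :
    1 - ε ≤ ∑ s : Fin n → X × A × A, Set.indicator
      {s | (sel s - θs) ⬝ᵥ (covMat D φ (pol π₀ φ θ) *ᵥ (sel s - θs))
        ≤ 76 * Real.exp (4 * γ * R) * Λ / (γ ^ 2 * n)}
      (fun s => ∏ i, sampleLaw D (pol π₀ φ θ) rstar (s i)) s := by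
  set π := pol π₀ φ θ with hπdef
  have hπ0 : ∀ x a, 0 ≤ π x a := fun x a => (pol_pos h0 θ x a).le
  have hπ : ∀ x, ∑ a, π x a = 1 := sum_pol h0 θ
  have hnR : (1:ℝ) ≤ n := by exact_mod_cast hn
  have hlaw : ∀ t, sampleLaw D π rstar t = 2 * pairLaw D π t * sigmoid (margin φ γ θs t) := by
    intro t
    unfold sampleLaw pairLaw margin
    rw [reward_diff h0 hγ hr]
    ring
  let pt : (Fin d → Fin (2 * M + 1)) → Fin d → ℝ := fun g i => h * (((g i : ℕ) : ℝ) - M)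
  refine net_markov (ι := Fin d → Fin (2 * M + 1)) (sampleLaw D π rstar) ?_ ?_
    (fun g t => Real.exp ((Real.log (sigmoid (margin φ γ (pt g) t))
      - Real.log (sigmoid (margin φ γ θs t))) / 2 + sigGap D φ π γ θs (pt g) / 4))
    (fun g t => (Real.exp_pos _).le) ?_ n hε _ ?_
  · intro t
    rw [hlaw]
    exact mul_nonneg (mul_nonneg zero_le_two (pairLaw_nonneg hD hπ0 t)) (sig_pos _).le
  · simp only [hlaw, mul_assoc]
    rw [← mul_sum, sum_pairLaw_sig hD1 hπ]; norm_num
  · intro g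
    simp only [hlaw]
    exact hellinger_mean hD hD1 hπ0 hπ γ θs (pt g)
  · intro s hs
    obtain ⟨hsR, hmin⟩ := hsel s
    -- round the minimizer down to the grid
    obtain ⟨g, hg⟩ : ∃ g : Fin d → Fin (2 * M + 1), ∀ i, |sel s i - pt g i| ≤ h := by
      have hex : ∀ i, ∃ j : Fin (2 * M + 1), |sel s i - h * (((j : ℕ) : ℝ) - M)| ≤ h := by
        intro i
        have hi := abs_le.1 (((abs_le_lpN hp.1 (sel s) i).trans hsR).trans hM)
        have hlow : -(M:ℤ) ≤ ⌊sel s i / h⌋ := by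
          rw [Int.le_floor, le_div_iff₀ hh]; push_cast; linarith [hi.1]
        have hup : ⌊sel s i / h⌋ ≤ (M:ℤ) := by
          have : sel s i / h ≤ M := by rw [div_le_iff₀ hh]; exact hi.2
          have h2 := (Int.floor_le (sel s i / h)).trans this
          exact_mod_cast h2
        refine ⟨⟨(⌊sel s i / h⌋ + M).toNat, by omega⟩, ?_⟩
        have hcast : (((⌊sel s i / h⌋ + M).toNat : ℕ) : ℝ) = (⌊sel s i / h⌋ : ℝ) + M := by
          have : (((⌊sel s i / h⌋ + M).toNat : ℕ) : ℤ) = ⌊sel s i / h⌋ + M :=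
            Int.toNat_of_nonneg (by omega)
          exact_mod_cast this
        simp only [hcast, add_sub_cancel_right]
        have f1 := Int.floor_le (sel s i / h)
        have f2 := (Int.lt_floor_add_one (sel s i / h)).le
        rw [le_div_iff₀ hh] at f1
        rw [div_le_iff₀ hh] at f2
        rw [abs_le]
        constructor <;> nlinarith
      choose g hg using hex
      exact ⟨g, hg⟩
    have hclose : ∀ t, |margin φ γ (sel s) t - margin φ γ (pt g) t| ≤ 1 / n := by
      intro t
      refine (abs_margin_sub_le hφ hγ hg t).trans ?_
      rw [le_div_iff₀ (by linarith)]
      exact hhn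
    have hprod := hs g
    rw [← Real.exp_sum] at hprod
    have hcard : (Fintype.card (Fin d → Fin (2 * M + 1)) : ℝ) = (2 * M + 1 : ℝ) ^ d := by
      simp
    rw [hcard] at hprod
    have hlog := (Real.le_log_iff_exp_le (by positivity)).2 hprod
    -- optimality of the minimizer transfers to the rounded parameter up to a constant
    have hml : -1 ≤ ∑ i, (Real.log (sigmoid (margin φ γ (pt g) (s i)))
        - Real.log (sigmoid (margin φ γ θs (s i)))) := by
      have h1 := hmin θs hθs
      rw [dpoLoss_eq h0, dpoLoss_eq h0, sum_neg_distrib, sum_neg_distrib] at h1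
      have h2 : ∑ i, (Real.log (sigmoid (margin φ γ (sel s) (s i)))
          - Real.log (sigmoid (margin φ γ (pt g) (s i)))) ≤ ∑ _i : Fin n, (1:ℝ) / n :=
        sum_le_sum fun i _ => (log_sig_sub_le _ _).trans (hclose _)
      rw [sum_const, card_univ, Fintype.card_fin, nsmul_eq_mul,
        mul_one_div_cancel (by linarith)] at h2
      rw [sum_sub_distrib] at h2 ⊢
      linarith
    rw [sum_add_distrib, ← sum_div, sum_const, card_univ, Fintype.card_fin, nsmul_eq_mul] at hlog
    have hgap : n * sigGap D φ π γ θs (pt g) ≤ 4 * Λ + 2 := by linarith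
    have hgap2 : sigGap D φ π γ θs (sel s) ≤ 2 * sigGap D φ π γ θs (pt g) + 2 * (1 / n) ^ 2 := by
      calc sigGap D φ π γ θs (sel s)
          ≤ ∑ t, (2 * (pairLaw D π t *
              (sigmoid (margin φ γ (pt g) t) - sigmoid (margin φ γ θs t)) ^ 2)
              + pairLaw D π t * (2 * (1 / n) ^ 2)) := by
            refine sum_le_sum fun t _ => ?_
            have hm := pairLaw_nonneg hD hπ0 t
            have e1 := sig_lipschitz (margin φ γ (sel s) t) (margin φ γ (pt g) t)
            have e2 : (margin φ γ (sel s) t - margin φ γ (pt g) t) ^ 2 ≤ (1 / (n:ℝ)) ^ 2 :=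
              sq_le_sq.2 ((hclose t).trans (le_abs_self _))
            have e3 : (sigmoid (margin φ γ (sel s) t) - sigmoid (margin φ γ θs t)) ^ 2
                ≤ 2 * (sigmoid (margin φ γ (pt g) t) - sigmoid (margin φ γ θs t)) ^ 2
                  + 2 * (1 / (n:ℝ)) ^ 2 := by
              nlinarith [sq_nonneg ((sigmoid (margin φ γ (sel s) t)
                - sigmoid (margin φ γ (pt g) t)) - (sigmoid (margin φ γ (pt g) t)
                - sigmoid (margin φ γ θs t)))]
            have := mul_le_mul_of_nonneg_left e3 hm
            linarith
        _ = _ := by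
            rw [sum_add_distrib, ← mul_sum, ← sum_mul, sum_pairLaw hD1 hπ, one_mul, ← sigGap]
    have hfin : sigGap D φ π γ θs (sel s) ≤ 9.5 * Λ / n := by
      rw [le_div_iff₀ (by linarith)]
      have h3 : (1 / (n:ℝ)) ^ 2 * n ≤ 1 := by
        have : (1 / (n:ℝ)) ^ 2 * n = 1 / n := by field_simp
        rw [this, div_le_one (by linarith)]; exact hnR
      have h4 := mul_le_mul_of_nonneg_right hgap2 (by linarith : (0:ℝ) ≤ n)
      linarith
    calc (sel s - θs) ⬝ᵥ (covMat D φ π *ᵥ (sel s - θs))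
        ≤ 8 * Real.exp (4 * γ * R) / γ ^ 2 * sigGap D φ π γ θs (sel s) :=
          quad_le_sigGap hD hφ hp hπ0 hπ hγ hθs hsR
      _ ≤ 8 * Real.exp (4 * γ * R) / γ ^ 2 * (9.5 * Λ / n) :=
          mul_le_mul_of_nonneg_left hfin (by positivity)
      _ = _ := by
          field_simp
          norm_num

end Step

/-! ### Contraction of the error recursion -/

/-- An affine recursion with small slope contracts geometrically down to its noise floor. -/
lemma contraction {R η b e : ℝ} (hR : 0 < R) (hη : η ∈ Set.Ioo (0:ℝ) 1) (hb : 0 ≤ b)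
    (he : 2.7 ≤ e) (hbR : e * b ≤ R) {K : ℕ} {r : ℕ → ℝ} (hr0 : r 0 ≤ R)
    (hstep : ∀ k < K, r k ≤ R → r (k + 1) ≤ 7 / 4 * η * (b + r k / 10)) :
    ∀ k ≤ K, r k ≤ max (e * b) (R * η ^ k)
  | 0, _ => by simpa using Or.inr hr0
  | (k+1), hk => by
    have ih := contraction hR hη hb he hbR hr0 hstep k (by omega)
    have hηk : η ^ k ≤ 1 := pow_le_one₀ hη.1.le hη.2.le
    have hle : r k ≤ R := ih.trans (max_le hbR (by nlinarith))
    have hs := hstep k (by omega) hle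
    have hb2 : 2.7 * b ≤ e * b := mul_le_mul_of_nonneg_right he hb
    -- the noise term and the slope together cost at most `7/4 * (10/27 + 1/10) < 1`
    have hm : ∀ m, e * b ≤ m → r k ≤ m → r (k + 1) ≤ η * m := by
      intro m h1 h2
      have : 7 / 4 * (b + r k / 10) ≤ m := by linarith
      calc r (k + 1) ≤ η * (7 / 4 * (b + r k / 10)) := by linarith
        _ ≤ η * m := mul_le_mul_of_nonneg_left this hη.1.le
    rcases le_total (e * b) (R * η ^ k) with h | h
    · rw [max_eq_right h] at ih
      refine (hm _ h ih).trans (le_max_of_le_right (le_of_eq ?_))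
      ring
    · rw [max_eq_left h] at ih
      refine (hm _ le_rfl ih).trans (le_max_of_le_left ?_)
      nlinarith [hη.2, mul_nonneg (by linarith : (0:ℝ) ≤ e) hb]

section Coverage

variable {X A : Type} [Fintype X] [Fintype A] {d : ℕ}
  {D : X → ℝ} {φ : X → A → Fin d → ℝ} {π₀ : X → A → ℝ}

lemma CstarP_zero_le [Nonempty A] (hD : ∀ x, 0 ≤ D x) (hφ : ∀ x a, ∑ i, (φ x a i) ^ 2 ≤ 1)
    (h0 : ∀ x a, 0 < π₀ x a) {p : ℝ} (hp : p ∈ Set.Icc (1:ℝ) 2) (θs : Fin d → ℝ) :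
    CstarP D φ π₀ p θs 0 ≤ 1 := by
  refine Real.sSup_le ?_ zero_le_one
  rintro c ⟨θ, hθ, rfl⟩
  have := csInf_le (coverage_bddBelow (D := D) (φ := φ) _ _) (exp_mem_coverage hD hφ h0 hp hθ)
  rw [mul_zero, Real.exp_zero] at this
  exact this

/-- In dimension zero every coverage coefficient degenerates to `0`. -/
lemma CstarP_dim_zero {D : X → ℝ} {φ : X → A → Fin 0 → ℝ} (p : ℝ) (θs : Fin 0 → ℝ) (r : ℝ) :
    CstarP D φ π₀ p θs r = 0 := by
  refine le_antisymm (Real.sSup_le ?_ le_rfl) (CstarP_nonneg p θs r)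
  rintro c ⟨θ, -, rfl⟩
  refine le_of_forall_pos_le_add fun ε hε => ?_
  rw [zero_add]
  refine csInf_le (coverage_bddBelow _ _) ⟨hε, ?_⟩
  refine loewner_of_quad (covMat_isHermitian _) ?_ fun v => ?_
  · exact Subsingleton.elim _ _
  · simp [dotProduct]

lemma one_le_CstarP [Nonempty A] (hD : ∀ x, 0 ≤ D x) (hφ : ∀ x a, ∑ i, (φ x a i) ^ 2 ≤ 1)
    (h0 : ∀ x a, 0 < π₀ x a) {p : ℝ} (hp : p ∈ Set.Icc (1:ℝ) 2) {θs : Fin d → ℝ} {lam : ℝ}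
    (hl : 0 < lam)
    (hV : LoewnerLE (lam • (1 : Matrix (Fin d) (Fin d) ℝ)) (covMat D φ (pol π₀ φ θs)))
    (hd : 0 < d) {R : ℝ} (hR : 0 < R) : 1 ≤ CstarP D φ π₀ p θs R := by
  have hz : lpN p (θs - θs) ≤ R := by
    have hp0 : p ≠ 0 := by linarith [hp.1]
    have : lpN p (θs - θs) = 0 := by
      simp [lpN, Real.zero_rpow hp0, hp0]
    rw [this]; exact hR.le
  have h1 := loewner_quad hV (Pi.single ⟨0, hd⟩ 1)
  have h2 := quad_le_CstarP hD hφ h0 hp hz (Pi.single ⟨0, hd⟩ 1)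
  simp only [smul_mulVec, one_mulVec, dotProduct_smul, single_dotProduct, Pi.single_eq_same,
    smul_eq_mul, mul_one, one_mul] at h1 h2
  nlinarith

lemma lam_le_two [Nonempty A] (hD : ∀ x, 0 ≤ D x) (hD1 : ∑ x, D x = 1)
    (hφ : ∀ x a, ∑ i, (φ x a i) ^ 2 ≤ 1)
    (h0 : ∀ x a, 0 < π₀ x a) {θs : Fin d → ℝ} {lam : ℝ}
    (hV : LoewnerLE (lam • (1 : Matrix (Fin d) (Fin d) ℝ)) (covMat D φ (pol π₀ φ θs)))
    (hd : 0 < d) : lam ≤ 2 := by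
  have h1 := loewner_quad hV (Pi.single ⟨0, hd⟩ 1)
  have h2 := pairForm_eq (D := D) (φ := φ) _ (sum_pol (φ := φ) h0 θs) (Pi.single ⟨0, hd⟩ 1)
  have h3 : pairForm D φ (pol π₀ φ θs) (Pi.single ⟨0, hd⟩ 1) ≤ 4 := by
    have hsum := sum_pairLaw hD1 (sum_pol (φ := φ) h0 θs)
    simp only [Fintype.sum_prod_type, pairLaw] at hsum
    calc pairForm D φ (pol π₀ φ θs) (Pi.single ⟨0, hd⟩ 1)
        ≤ ∑ x, D x * ∑ a, ∑ b, pol π₀ φ θs x a * pol π₀ φ θs x b * 4 := by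
          refine sum_le_sum fun x _ => mul_le_mul_of_nonneg_left ?_ (hD x)
          refine sum_le_sum fun a _ => sum_le_sum fun b _ => ?_
          refine mul_le_mul_of_nonneg_left ?_
            (mul_nonneg (pol_pos h0 θs x a).le (pol_pos h0 θs x b).le)
          have hc : ∀ a, φ x a ⟨0, hd⟩ ^ 2 ≤ 1 := fun a =>
            (single_le_sum (f := fun i => φ x a i ^ 2) (fun _ _ => sq_nonneg _)
              (mem_univ _)).trans (hφ x a)
          simp only [Pi.single_apply, ite_mul, one_mul, zero_mul, sum_ite_eq', mem_univ, if_true]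
          nlinarith [hc a, hc b, sq_nonneg (φ x a ⟨0, hd⟩ + φ x b ⟨0, hd⟩)]
      _ = 4 * ∑ x, ∑ a, ∑ b, D x * pol π₀ φ θs x a * pol π₀ φ θs x b := by
          simp only [mul_sum]
          exact sum_congr rfl fun x _ => sum_congr rfl fun a _ => sum_congr rfl fun b _ => by ring
      _ = 4 := by rw [hsum, mul_one]
  simp only [smul_mulVec, one_mulVec, dotProduct_smul, single_dotProduct, Pi.single_eq_same,
    smul_eq_mul, mul_one, one_mul] at h1 h2
  linarith

end Coverage

/-! ### Sample-size arithmetic -/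

lemma log_budget_ge {a x : ℝ} (ha : 10 ≤ a) (hx : 1 ≤ x) : 2 ≤ Real.log (9 * a * x) := by
  rw [Real.le_log_iff_exp_le (by positivity)]
  have h1 := Real.exp_one_lt_d9
  have h2 : Real.exp 2 = Real.exp 1 ^ 2 := by rw [← Real.exp_nat_mul]; norm_num
  have h3 := Real.exp_pos 1
  nlinarith

/-- The metric entropy of the grid together with the union bound over iterations costs at most
`2d` times the logarithmic factor; `m = 2M+1` is the number of grid points per coordinate and `c`
is the inverse failure probability per iteration. -/
lemma entropy_budget {a c m n : ℝ} {d : ℕ} (hd : 0 < d) (ha : 10 ≤ a) (hc : 1 ≤ c) (hn : 1 ≤ n)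
    (hdn : (d:ℝ) ≤ n) (hm0 : 0 < m) (hm : m ≤ 4 * a * d * n + 3) :
    Real.log (m ^ d * c) ≤ 2 * d * Real.log (9 * a * (n * c)) := by
  have hd1 : (1:ℝ) ≤ d := by exact_mod_cast hd
  have h1 : m * c ≤ (9 * a * (n * c)) ^ 2 := by
    have e1 : a * d * n ≤ a * n * n := by gcongr
    have e2 : 1 ≤ n * n := by nlinarith
    have e3 : 10 * 1 ≤ a * (n * n) := mul_le_mul ha e2 zero_le_one (by linarith)
    have e4 : m ≤ 5 * (a * (n * n)) := by nlinarith
    have e5 : m ≤ 81 * (a * (n * n)) * a := by nlinarith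
    calc m * c ≤ 81 * (a * (n * n)) * a * c := mul_le_mul_of_nonneg_right e5 (by linarith)
      _ ≤ 81 * (a * (n * n)) * a * c * c := le_mul_of_one_le_right (by positivity) hc
      _ = _ := by ring
  have h2 : m ^ d * c ≤ ((9 * a * (n * c)) ^ 2) ^ d := by
    calc m ^ d * c ≤ m ^ d * c ^ d :=
          mul_le_mul_of_nonneg_left (le_self_pow₀ hc hd.ne') (by positivity)
      _ = (m * c) ^ d := (mul_pow _ _ _).symm
      _ ≤ _ := pow_le_pow_left₀ (by positivity) h1 d
  calc Real.log (m ^ d * c) ≤ Real.log (((9 * a * (n * c)) ^ 2) ^ d) :=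
        Real.log_le_log (by positivity) h2
    _ = _ := by rw [Real.log_pow, Real.log_pow]; push_cast; ring

/-! ### The deterministic error recursion -/

section Recursion

variable {X A : Type} [Fintype X] [Fintype A] {d : ℕ}
  {D : X → ℝ} {φ : X → A → Fin d → ℝ} {π₀ : X → A → ℝ}

/-- Once every iteration meets its covariance bound, the final error is controlled: coverage
transfers the bound to `V(π*)`, strong convexity of `V(π*)` turns it into a norm, and convexity of
the square-root coverage makes the resulting recursion affine. -/
lemma error_of_steps [Nonempty A] (hD : ∀ x, 0 ≤ D x) (hφ : ∀ x a, ∑ i, (φ x a i) ^ 2 ≤ 1)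
    (h0 : ∀ x a, 0 < π₀ x a) {p : ℝ} (hp : p ∈ Set.Icc (1:ℝ) 2) {γ R : ℝ} (hγ : 0 < γ) (hR : 0 < R)
    {θs : Fin d → ℝ} (hθs : lpN p θs ≤ R) {lam : ℝ} (hl : 0 < lam)
    (hV : LoewnerLE (lam • (1 : Matrix (Fin d) (Fin d) ℝ)) (covMat D φ (pol π₀ φ θs)))
    (hconv : ConvexOn ℝ (Set.Icc (0:ℝ) R) (fun r => Real.sqrt (CstarP D φ π₀ p θs r)))
    {η : ℝ} (hη : η ∈ Set.Ioo (0:ℝ) 1) (hd : 0 < d) (hγR : 10 / γ ≤ R) {n : ℕ} (hn : 0 < n)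
    {L ξ : ℝ} (hL : 0 ≤ L)
    (hξ : ξ = 52 * Real.exp (4 * γ * R) * (d:ℝ) ^ ((2:ℝ) / p) / (lam * η ^ 2 * n) * L)
    (hξC : ξ ≤ 1 / CstarP D φ π₀ p θs R) {K : ℕ} {θ : ℕ → Fin d → ℝ} (hθ0 : θ 0 = fun _ => 0)
    (hstep : ∀ k < K, (θ (k + 1) - θs) ⬝ᵥ (covMat D φ (pol π₀ φ (θ k)) *ᵥ (θ (k + 1) - θs))
      ≤ 76 * Real.exp (4 * γ * R) * (2 * d * L) / (γ ^ 2 * n)) :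
    (lpN p (θ K - θs)) ^ 2 ≤ max (Real.exp 2 / γ ^ 2 * ξ) (R ^ 2 * η ^ (2 * K)) := by
  have hη0 := hη.1
  have hnR : (0:ℝ) < n := by exact_mod_cast hn
  have hdR : (0:ℝ) < d := by exact_mod_cast hd
  have hC1 : 1 ≤ CstarP D φ π₀ p θs R := one_le_CstarP hD hφ h0 hp hl hV hd hR
  have hξ0 : 0 ≤ ξ := by rw [hξ]; positivity
  set f := fun r => Real.sqrt (CstarP D φ π₀ p θs r) with hf
  set b := Real.sqrt ξ / γ with hb
  have hb0 : 0 ≤ b := by positivity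
  have hfR : 1 ≤ f R := Real.one_le_sqrt.2 hC1
  have hbf : b * f R ≤ R / 10 := by
    have h1 : Real.sqrt ξ * f R ≤ 1 := by
      rw [hf, ← Real.sqrt_mul hξ0]
      refine Real.sqrt_le_one.2 ?_
      rwa [le_div_iff₀ (by linarith)] at hξC
    have h2 : b * f R ≤ 1 / γ := by
      rw [hb, div_mul_eq_mul_div]; gcongr
    have h3 : 10 / γ = 10 * (1 / γ) := by ring
    linarith
  have hbR : b ≤ R / 10 := (le_mul_of_one_le_right hb0 hfR).trans hbf
  have hchord : ∀ r, 0 ≤ r → r ≤ R → f r ≤ 1 + f R * (r / R) := by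
    intro r hr0 hrR
    have hle : r / R ≤ 1 := (div_le_one hR).2 hrR
    have := hconv.2 (Set.left_mem_Icc.2 hR.le) (Set.right_mem_Icc.2 hR.le)
      (sub_nonneg.2 hle) (by positivity : 0 ≤ r / R) (by ring)
    simp only [smul_eq_mul, mul_zero, zero_add, div_mul_cancel₀ r hR.ne'] at this
    have hf0 : f 0 ≤ 1 := Real.sqrt_le_one.2 (CstarP_zero_le hD hφ h0 hp θs)
    have hrR0 : 0 ≤ r / R := by positivity
    have : f r ≤ (1 - r / R) * f 0 + r / R * f R := this
    nlinarith
  have hrec : ∀ k < K, lpN p (θ k - θs) ≤ R →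
      lpN p (θ (k + 1) - θs) ≤ 7 / 4 * η * (b + lpN p (θ k - θs) / 10) := by
    intro k hk hkR
    set r := lpN p (θ k - θs) with hr
    set u := θ (k + 1) - θs with hu
    have hr0 : 0 ≤ r := lpN_nonneg _ _
    have hC0 : 0 ≤ CstarP D φ π₀ p θs r := CstarP_nonneg _ _ _
    have q1 := loewner_quad hV u
    have q2 := quad_le_CstarP hD hφ h0 hp (le_refl r) u
    have q3 := mul_le_mul_of_nonneg_left (hstep k hk) hC0
    have q4 := lpN_sq_le hp u
    have q1' : lam * ∑ i, u i ^ 2 ≤ u ⬝ᵥ (covMat D φ (pol π₀ φ θs) *ᵥ u) := by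
      refine le_trans (le_of_eq ?_) q1
      simp only [smul_mulVec, one_mulVec, dotProduct, Pi.smul_apply, smul_eq_mul, mul_sum]
      exact sum_congr rfl fun i _ => by ring
    have hexp : (d:ℝ) ^ ((2:ℝ) / p - 1) * d = (d:ℝ) ^ ((2:ℝ) / p) := by
      rw [Real.rpow_sub_one hdR.ne', div_mul_cancel₀ _ hdR.ne']
    have hsq : lpN p u ^ 2 ≤ (7 / 4 * η * (b * f r)) ^ 2 := by
      have e1 : (7 / 4 * η * (b * f r)) ^ 2
          = 49 / 16 * η ^ 2 * (ξ / γ ^ 2) * CstarP D φ π₀ p θs r := by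
        have : f r ^ 2 = CstarP D φ π₀ p θs r := Real.sq_sqrt hC0
        rw [← this, hb]
        have h2 : Real.sqrt ξ ^ 2 = ξ := Real.sq_sqrt hξ0
        rw [← h2]; simp only [Real.sqrt_sq (Real.sqrt_nonneg ξ)]; ring
      rw [e1]
      have e2 : ∑ i, u i ^ 2 ≤ CstarP D φ π₀ p θs r *
          (76 * Real.exp (4 * γ * R) * (2 * d * L) / (γ ^ 2 * n)) / lam := by
        rw [le_div_iff₀ hl]; linarith
      calc lpN p u ^ 2 ≤ (d:ℝ) ^ ((2:ℝ) / p - 1) * (CstarP D φ π₀ p θs r *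
          (76 * Real.exp (4 * γ * R) * (2 * d * L) / (γ ^ 2 * n)) / lam) :=
            q4.trans (mul_le_mul_of_nonneg_left e2 (by positivity))
        _ = 152 / 52 * η ^ 2 * (ξ / γ ^ 2) * CstarP D φ π₀ p θs r := by
            rw [hξ, ← hexp]; field_simp; ring
        _ ≤ _ := by
            have : 0 ≤ η ^ 2 * (ξ / γ ^ 2) * CstarP D φ π₀ p θs r := by positivity
            linarith
    have hroot := abs_le_of_sq_le_sq hsq (by positivity)
    refine (le_abs_self _).trans (hroot.trans ?_)
    have h1 := hchord r hr0 hkR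
    have h2 : b * f R * (r / R) ≤ r / 10 := by
      have := mul_le_mul_of_nonneg_right hbf (by positivity : 0 ≤ r / R)
      refine this.trans (le_of_eq ?_)
      field_simp
    have h3 : b * f r ≤ b + r / 10 := by
      have := mul_le_mul_of_nonneg_left h1 hb0
      linarith
    exact mul_le_mul_of_nonneg_left h3 (by positivity)
  have he : (2.7:ℝ) ≤ Real.exp 1 := by linarith [Real.exp_one_gt_d9]
  have heb : Real.exp 1 * b ≤ R := by nlinarith [Real.exp_one_lt_d9]
  have hr0 : lpN p (θ 0 - θs) ≤ R := by
    refine le_trans (le_of_eq ?_) hθs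
    simp [lpN, hθ0]
  have hfin := contraction hR hη hb0 he heb (r := fun k => lpN p (θ k - θs)) hr0 hrec K le_rfl
  have e1 : (Real.exp 1 * b) ^ 2 = Real.exp 2 / γ ^ 2 * ξ := by
    rw [hb, mul_pow, div_pow, Real.sq_sqrt hξ0, ← Real.exp_nat_mul]; norm_num; ring
  have e2 : (R * η ^ K) ^ 2 = R ^ 2 * η ^ (2 * K) := by ring
  rw [← e1, ← e2]
  rcases le_max_iff.1 hfin with h | h
  · exact le_max_of_le_left (pow_le_pow_left₀ (lpN_nonneg _ _) h 2)
  · exact le_max_of_le_right (pow_le_pow_left₀ (lpN_nonneg _ _) h 2)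

end Recursion

/-- A sample size for which the noise level is at most one dominates the dimension. -/
lemma dim_le_of_noise {E L lam η p : ℝ} {d n : ℕ} (hE : 1 ≤ E) (hL : 2 ≤ L) (hl : 0 < lam)
    (hl2 : lam ≤ 2) (hη : η ∈ Set.Ioo (0:ℝ) 1) (hp : p ∈ Set.Icc (1:ℝ) 2) (hd : 0 < d) (hn : 0 < n)
    (h : 52 * E * (d:ℝ) ^ ((2:ℝ) / p) / (lam * η ^ 2 * n) * L ≤ 1) : (d:ℝ) ≤ n := by
  have hη0 := hη.1
  have hnR : (0:ℝ) < n := by exact_mod_cast hn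
  have hd1 : (1:ℝ) ≤ d := by exact_mod_cast hd
  have h1 : (d:ℝ) ≤ (d:ℝ) ^ ((2:ℝ) / p) := by
    refine Real.self_le_rpow_of_one_le hd1 ?_
    rw [le_div_iff₀ (by linarith [hp.1])]; linarith [hp.2]
  have h2 : lam * η ^ 2 * n ≤ 2 * n := by
    have : η ^ 2 ≤ 1 := pow_le_one₀ hη.1.le hη.2.le
    have : lam * η ^ 2 ≤ 2 * 1 := mul_le_mul hl2 this (sq_nonneg _) zero_le_two
    nlinarith
  have h3 : 52 * E * (d:ℝ) ^ ((2:ℝ) / p) * L ≤ lam * η ^ 2 * n := by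
    rwa [div_mul_eq_mul_div, div_le_one (by positivity)] at h
  have h4 : 1 * 1 ≤ E * L := mul_le_mul hE (by linarith) zero_le_one (by linarith)
  have h5 : (d:ℝ) ^ ((2:ℝ) / p) ≤ (d:ℝ) ^ ((2:ℝ) / p) * (E * L) :=
    le_mul_of_one_le_right (by positivity) (by linarith)
  nlinarith

/-! ### Convergence -/

/-- Fast convergence of on-policy DPO: under realizability, V(π*) ⪰ λI, and
square-root-convex local coverage, for every batch size n with
ξ_n = (52·e^{4γR}·d^{2/p}/(λη²n))·ln(9γRKn/δ) ≤ c₂/C_*^p(R), with probability at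
least 1 − δ the output θ̂_K of K iterations of on-policy DPO satisfies
KL(π_{θ̂_K} ‖ π*) ≤ ‖θ̂_K − θ*‖_p² ≤ max((e²/γ²)·ξ_n, R²·η^{2K}). -/
theorem fast_convergence_online_dpo :
    ∃ c₁ c₂ : ℝ, 0 < c₁ ∧ 0 < c₂ ∧
    ∀ (X A : Type) (_ : Fintype X) (_ : Fintype A) (_ : Nonempty X) (_ : Nonempty A)
      (d : ℕ)
      (D : X → ℝ), (∀ x, 0 ≤ D x) → (∑ x, D x = 1) →
    ∀ (φ : X → A → Fin d → ℝ), (∀ x a, ∑ i, (φ x a i)^2 ≤ 1) →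
    ∀ (π₀ : X → A → ℝ), (∀ x a, 0 < π₀ x a) → (∀ x, ∑ a, π₀ x a = 1) →
    ∀ (γ R : ℝ), 0 < γ → 0 < R →
    ∀ (p : ℝ), p ∈ Set.Icc (1:ℝ) 2 →
    ∀ (rstar : X → A → ℝ) (θstar : Fin d → ℝ), lpN p θstar ≤ R →
    (∀ x a, pol π₀ φ θstar x a
      = π₀ x a * Real.exp (γ⁻¹ * rstar x a) / ∑ b, π₀ x b * Real.exp (γ⁻¹ * rstar x b)) →
    ∀ (lam : ℝ), 0 < lam →
    LoewnerLE (lam • (1 : Matrix (Fin d) (Fin d) ℝ)) (covMat D φ (pol π₀ φ θstar)) →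
    ConvexOn ℝ (Set.Icc (0:ℝ) R) (fun r => Real.sqrt (CstarP D φ π₀ p θstar r)) →
    ∀ (η δ : ℝ), η ∈ Set.Ioo (0:ℝ) 1 → δ ∈ Set.Ioo (0:ℝ) 1 →
    ∀ (K : ℕ),
    c₁ / γ ≤ min (Real.sqrt (CstarP D φ π₀ p θstar R)) R →
    ∀ (n : ℕ), 0 < n →
    ∀ (ξn : ℝ), ξn = 52 * Real.exp (4*γ*R) * (d:ℝ)^((2:ℝ)/p) / (lam * η^2 * n)
        * Real.log (9*γ*R*K*n/δ) →
    ξn ≤ c₂ / CstarP D φ π₀ p θstar R →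
    ∀ (sel : (Fin n → X × A × A) → (Fin d → ℝ)),
    (∀ s, lpN p (sel s) ≤ R ∧
      ∀ θ : Fin d → ℝ, lpN p θ ≤ R → dpoLoss π₀ φ γ (sel s) s ≤ dpoLoss π₀ φ γ θ s) →
    1 - δ ≤ ∑ s : Fin K → Fin n → X × A × A,
      Set.indicator
        {s : Fin K → Fin n → X × A × A |
          klPol D (pol π₀ φ (trajParam sel s K)) (pol π₀ φ θstar)
              ≤ (lpN p (trajParam sel s K - θstar))^2 ∧
          (lpN p (trajParam sel s K - θstar))^2
              ≤ max (Real.exp 2 / γ^2 * ξn) (R^2 * η^(2*K))}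
        (fun s => ∏ k : Fin K, ∏ i : Fin n,
          sampleLaw D (pol π₀ φ (trajParam sel s k)) rstar (s k i)) s := by
  refine ⟨10, 1, by norm_num, one_pos, ?_⟩
  intro X A _ _ _ _ d D hD hD1 φ hφ π₀ h0 _ γ R hγ hR p hp rstar θs hθs hr lam hl hV hconv η δ hη hδ
    K hmin n hn ξ hξ hξC sel hsel
  have hη0 := hη.1
  have hδ0 := hδ.1
  have hnR : (1:ℝ) ≤ n := by exact_mod_cast hn
  have hγR : 10 / γ ≤ R := hmin.trans (min_le_right _ _)
  -- in dimension zero the coverage is `0`, which the lower bound on its square root excludes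
  have hd : 0 < d := by
    refine Nat.pos_of_ne_zero ?_
    rintro rfl
    have h1 := hmin.trans (min_le_left _ _)
    rw [CstarP_dim_zero, Real.sqrt_zero] at h1
    have : 0 < 10 / γ := by positivity
    linarith
  have hd1 : (1:ℝ) ≤ d := by exact_mod_cast hd
  have ha : 10 ≤ γ * R := by rwa [div_le_iff₀ hγ, mul_comm] at hγR
  have hC1 : 1 ≤ CstarP D φ π₀ p θs R := one_le_CstarP hD hφ h0 hp hl hV hd hR
  set L := Real.log (9 * γ * R * K * n / δ) with hLdef
  have hL2 : 0 < K → 2 ≤ L := by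
    intro hK
    have hKR : (1:ℝ) ≤ K := by exact_mod_cast hK
    have hx : (1:ℝ) ≤ K * n / δ := by
      rw [le_div_iff₀ hδ0, one_mul]
      exact hδ.2.le.trans (one_le_mul_of_one_le_of_one_le hKR hnR)
    have := log_budget_ge ha hx
    refine this.trans (le_of_eq ?_)
    rw [hLdef]; congr 1; ring
  have hL0 : 0 ≤ L := by
    rcases K.eq_zero_or_pos with hK | hK
    · simp [hLdef, hK]
    · linarith [hL2 hK]
  have hlaw0 : ∀ θ (t : X × A × A), 0 ≤ sampleLaw D (pol π₀ φ θ) rstar t := by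
    intro θ t
    have h1 := hD t.1
    have h2 := (pol_pos (φ := φ) h0 θ t.1 t.2.1).le
    have h3 := (pol_pos (φ := φ) h0 θ t.1 t.2.2).le
    have h4 := (sig_pos (rstar t.1 t.2.1 - rstar t.1 t.2.2)).le
    unfold sampleLaw
    positivity
  -- the batches on which one DPO step, started from `θ`, meets its covariance bound
  let G : (Fin d → ℝ) → Set (Fin n → X × A × A) := fun θ =>
    {s | (sel s - θs) ⬝ᵥ (covMat D φ (pol π₀ φ θ) *ᵥ (sel s - θs))
      ≤ 76 * Real.exp (4 * γ * R) * (2 * d * L) / (γ ^ 2 * n)}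
  let W : (Fin d → ℝ) → (Fin n → X × A × A) → ℝ := fun θ s =>
    (G θ).indicator (fun s => ∏ i, sampleLaw D (pol π₀ φ θ) rstar (s i)) s
  have hW0 : ∀ θ s, 0 ≤ W θ s := fun θ s =>
    Set.indicator_nonneg (fun s _ => prod_nonneg fun i _ => hlaw0 θ (s i)) s
  have hmass : 1 - δ ≤ ∑ s : Fin K → Fin n → X × A × A,
      ∏ k : Fin K, W (trajParam sel s k) (s k) := by
    have htraj : ∀ (s : Fin K → Fin n → X × A × A) (k : ℕ),
        trajParam sel s k = trajFrom sel (fun _ => 0) (fun _ => 0) s k := by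
      rintro s (_ | k) <;> rfl
    simp only [htraj]
    rcases K.eq_zero_or_pos with rfl | hK
    · simp [hδ0.le]
    have hKR : (1:ℝ) ≤ K := by exact_mod_cast hK
    have hdn : (d:ℝ) ≤ n := by
      refine dim_le_of_noise (Real.one_le_exp (by nlinarith)) (hL2 hK) hl
        (lam_le_two hD hD1 hφ h0 hV hd) hη hp hd hn (hξ ▸ hξC.trans ?_)
      exact (div_le_one (by linarith)).2 hC1
    have hε : 0 < δ / K := by positivity
    have hε1 : δ / K ≤ 1 := (div_le_one (by positivity)).2 (by linarith [hδ.2])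
    have hstep : ∀ θ, 1 - δ / K ≤ ∑ t, W θ t := by
      intro θ
      -- a mesh this fine moves the empirical log-likelihood by at most one
      have hh : 0 < 1 / (2 * γ * d * n) := by positivity
      have hM : R ≤ ⌈R / (1 / (2 * γ * d * n))⌉₊ * (1 / (2 * γ * d * n)) := by
        rw [← div_le_iff₀ hh]; exact Nat.le_ceil _
      have hM2 := Nat.ceil_lt_add_one (show 0 ≤ R / (1 / (2 * γ * d * n)) by positivity)
      have hM3 : R / (1 / (2 * γ * d * n)) = 2 * (γ * R) * d * n := by
        rw [div_div_eq_mul_div, div_one]; ring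
      set M := ⌈R / (1 / (2 * γ * d * n))⌉₊
      refine dpo_step hD hD1 hφ h0 hp hγ hθs hr hn hsel hh hM ?_ hε ?_ ?_ θ
      · refine le_of_eq ?_
        field_simp
      · have hc : (1:ℝ) ≤ K / δ := by
          rw [le_div_iff₀ hδ0]; linarith [hδ.2]
        have := entropy_budget (a := γ * R) (c := K / δ) (m := 2 * M + 1) hd ha hc hnR hdn
          (by positivity) (by linarith)
        have e1 : ((2 * M + 1 : ℝ) ^ d / (δ / K)) = (2 * M + 1) ^ d * (K / δ) := by
          rw [div_div_eq_mul_div, mul_div_assoc]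
        rw [e1]
        refine this.trans (le_of_eq ?_)
        rw [hLdef]; congr 2; ring
      · nlinarith [hL2 hK]
    have hb := one_add_mul_le_pow (a := -(δ / K)) (by linarith) K
    have hK0 : (K:ℝ) * -(δ / K) = -δ := by field_simp
    rw [hK0] at hb
    have := adaptive_mass sel (fun _ => 0) W hW0 (by linarith) hstep K (fun _ => 0)
    refine le_trans ?_ this
    simpa [sub_eq_add_neg] using hb
  refine hmass.trans (sum_le_sum fun s _ => ?_)
  by_cases hgood : ∀ k : Fin K, s k ∈ G (trajParam sel s k)
  · have herr := error_of_steps (θ := trajParam sel s) (K := K) hD hφ h0 hp hγ hR hθs hl hV hconv hη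
      hd hγR hn hL0 hξ hξC rfl (by
        intro k hk
        have h1 : trajParam sel s (k + 1) = sel (s ⟨k, hk⟩) := by simp [trajParam, hk]
        rw [h1]
        exact hgood ⟨k, hk⟩)
    rw [Set.indicator_of_mem]
    swap
    · exact ⟨klPol_le hD hD1 hφ h0 hp _ _, herr⟩
    refine le_of_eq (prod_congr rfl fun k _ => ?_)
    exact Set.indicator_of_mem (hgood k) _
  · push Not at hgood
    obtain ⟨k, hk⟩ := hgood
    rw [prod_eq_zero (mem_univ k) (Set.indicator_of_notMem hk _)]
    exact Set.indicator_nonneg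
      (fun s _ => prod_nonneg fun k _ => prod_nonneg fun i _ => hlaw0 _ _) _
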